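/- For each n, endow the finite set of walks on the slit plane of length n with the uniform probability measure, and let (X_n, Y_n) ∈ ℤ² be the endpoint of the random walk. Then the pair (X_n/√n, Y_n/√n) converges in distribution, as n → ∞, to the probability measure on ℝ² with density f(x,y) = (√2/Γ(1/4)) · e^{−(x²+y²)} · √(x + √(x²+y²)) with respect to Lebesgue measure. -/

import Mathlib

open Filter

/-- The forbidden half-line `H = {(k,0) : k ≤ 0}`. -/
def slitH : Set (ℤ × ℤ) := {p : ℤ × ℤ | p.2 = 0 ∧ p.1 ≤ 0}

/-- The four steps of the ordinary square lattice. -/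
def sqSteps : Set (ℤ × ℤ) := {(1,0), (-1,0), (0,1), (0,-1)}

/-- The four diagonal steps. -/
def diagSteps : Set (ℤ × ℤ) := {(1,1), (1,-1), (-1,1), (-1,-1)}

/-- `w : Fin (n+1) → ℤ × ℤ` is a walk on the slit plane with steps in `A`. -/
def IsSlitWalk (A : Set (ℤ × ℤ)) (n : ℕ) (w : Fin (n+1) → ℤ × ℤ) : Prop :=
  w 0 = (0,0) ∧ (∀ m : Fin n, w m.succ - w m.castSucc ∈ A) ∧
    ∀ m : Fin (n+1), 1 ≤ (m : ℕ) → w m ∉ slitH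

/-- `a_{i,j}(n)`: the number of walks on the slit plane of length `n` ending at `(i,j)`. -/
noncomputable def slitCount (A : Set (ℤ × ℤ)) (i j : ℤ) (n : ℕ) : ℕ :=
  Nat.card {w : Fin (n+1) → ℤ × ℤ // IsSlitWalk A n w ∧ w (Fin.last n) = (i, j)}
/-- `a(n)`: the total number of walks on the slit plane of length `n`. -/
noncomputable def slitTotal (A : Set (ℤ × ℤ)) (n : ℕ) : ℕ :=
  Nat.card {w : Fin (n+1) → ℤ × ℤ // IsSlitWalk A n w}

/-- The density of the limit law of the rescaled endpoint of a uniformly random walk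
on the slit plane. -/
noncomputable def slitDensity (q : ℝ × ℝ) : ℝ :=
  Real.sqrt 2 / Real.Gamma (1/4) * Real.exp (-(q.1 ^ 2 + q.2 ^ 2))
    * Real.sqrt (q.1 + Real.sqrt (q.1 ^ 2 + q.2 ^ 2))

/-!
Let `S` be the simple random walk from the origin and `τ ≥ 1` its first visit to the slit. For
`|z| = |w| = 1` the generating function `∑ₙ tⁿ 𝔼[z^X w^Y; τ > n]` times
`1 - t (Re z + Re w) / 2` equals `B(z̄)`, where `B(z) = 1 - 𝔼[t^τ z^|S_τ|]`. Read row by row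
this is a linear recurrence, whose bounded solution gives
`A(z) √((1 - t Re z / 2)² - (t / 2)²) = B(z̄)` for the generating function `A` of the walks
ending on the axis. Both `A` and `B` are analytic in
the disc, so a Wiener–Hopf factorization of the square root determines `B`. Its square-root
singularity at `z = t = 1` yields the scaling limit, of order `N^{3/4}`, of the generating
function at `t = e^{-l/N}`, `z = e^{ia/√N}`, `w = e^{ib/√N}`.

A Tauberian argument passes from generating functions to the individual time `n = N`: the
survival probability is monotone in `n`, and its decay rate `n^{-1/4}` bounds the oscillation
of the Fourier transforms in `n`. The limit is recognized as the Laplace transform of an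
explicit kernel by integrating first in time, which is a first-passage computation, and then
over the plane in parabolic coordinates, where the integral becomes Gaussian. At `a = b = 0`
the same limit shows that the density has total mass `1`, and Lévy's continuity theorem
concludes.
-/

namespace SlitWalk

open Set Topology MeasureTheory ComplexConjugate

/-! ### Walks and killed means -/

section Walks

variable {n : ℕ}

theorem isSlitWalk_snoc {A : Set (ℤ × ℤ)} {w : Fin (n + 1) → ℤ × ℤ} {p : ℤ × ℤ} :
    IsSlitWalk A (n + 1) (Fin.snoc w p : Fin (n + 2) → ℤ × ℤ) ↔
      IsSlitWalk A n w ∧ p - w (Fin.last n) ∈ A ∧ p ∉ slitH := by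
  have succ_eq (m : Fin n) : (Fin.snoc w p : Fin (n + 2) → ℤ × ℤ) m.castSucc.succ = w m.succ := by
    rw [← Fin.castSucc_succ, Fin.snoc_castSucc (α := fun _ => ℤ × ℤ)]
  have zero_eq : (Fin.snoc w p : Fin (n + 2) → ℤ × ℤ) 0 = w 0 := by simp
  simp only [IsSlitWalk, zero_eq, Fin.forall_fin_succ' (n := n), Fin.forall_fin_succ' (n := n + 1),
    Fin.succ_last, succ_eq, Fin.snoc_castSucc (α := fun _ => ℤ × ℤ),
    Fin.snoc_last (α := fun _ => ℤ × ℤ), Fin.val_castSucc, Fin.val_last]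
  grind

theorem finite_setOf_isSlitWalk (A : Finset (ℤ × ℤ)) (n : ℕ) :
    {w | IsSlitWalk (A : Set (ℤ × ℤ)) n w}.Finite := by
  induction n with
  | zero =>
    refine (finite_singleton fun _ => (0, 0)).subset fun w hw => ?_
    ext1 m
    rw [Fin.fin_one_eq_zero m, hw.1]
  | succ n ih =>
    refine ((ih.prod A.finite_toSet).image fun q =>
      (Fin.snoc q.1 (q.1 (Fin.last n) + q.2) : Fin (n + 2) → ℤ × ℤ)).subset fun w hw => ?_
    rw [mem_ofPred_eq, ← Fin.snoc_init_self (α := fun _ => ℤ × ℤ) w, isSlitWalk_snoc] at hw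
    exact ⟨(Fin.init w, _), ⟨hw.1, hw.2.1⟩, by simp⟩

/-- The finite set of all walks of length `n` on the slit plane with steps in `A`. -/
noncomputable def slitWalks (A : Finset (ℤ × ℤ)) (n : ℕ) : Finset (Fin (n + 1) → ℤ × ℤ) :=
  (finite_setOf_isSlitWalk A n).toFinset

variable {A : Finset (ℤ × ℤ)}

@[simp]
theorem mem_slitWalks {w : Fin (n + 1) → ℤ × ℤ} :
    w ∈ slitWalks A n ↔ IsSlitWalk (A : Set (ℤ × ℤ)) n w := by
  simp [slitWalks]

theorem slitWalks_zero : slitWalks A 0 = {fun _ => (0, 0)} := by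
  ext w
  simp [IsSlitWalk, funext_iff]

theorem sum_slitWalks_succ {M : Type*} [AddCommMonoid M] (f : ℤ × ℤ → M) :
    ∑ w ∈ slitWalks A (n + 1), f (w (Fin.last (n + 1))) =
      ∑ w ∈ slitWalks A n, ∑ s ∈ A, slitHᶜ.indicator f (w (Fin.last n) + s) := by
  classical
  simp only [indicator_apply]
  rw [← Finset.sum_product', ← Finset.sum_filter]
  refine Finset.sum_bij'
    (fun w _ => (Fin.init w, w (Fin.last (n + 1)) - Fin.init w (Fin.last n)))
    (fun q _ => (Fin.snoc q.1 (q.1 (Fin.last n) + q.2) : Fin (n + 2) → ℤ × ℤ))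
    (fun w hw => ?_) (fun q hq => ?_) (by simp) (by simp) (by simp)
  · rw [mem_slitWalks, ← Fin.snoc_init_self (α := fun _ => ℤ × ℤ) w, isSlitWalk_snoc] at hw
    simpa [and_assoc] using hw
  · rw [mem_slitWalks, isSlitWalk_snoc]
    simpa [and_assoc] using hq

theorem slitTotal_eq_card : slitTotal A n = (slitWalks A n).card :=
  Nat.subtype_card _ fun _ => mem_slitWalks

theorem tsum_slitCount_mul (f : ℤ × ℤ → ℝ) :
    ∑' p : ℤ × ℤ, (slitCount A p.1 p.2 n : ℝ) * f p =
      ∑ w ∈ slitWalks A n, f (w (Fin.last n)) := by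
  classical
  have count_mul (p : ℤ × ℤ) : (slitCount A p.1 p.2 n : ℝ) * f p =
      ∑ w ∈ slitWalks A n, if p = w (Fin.last n) then f (w (Fin.last n)) else 0 := by
    have hcard : slitCount A p.1 p.2 n = ((slitWalks A n).filter (p = · (Fin.last n))).card :=
      Nat.subtype_card _ fun w => by rw [Finset.mem_filter, mem_slitWalks, eq_comm (a := p)]
    rw [hcard, ← Finset.sum_boole, Finset.sum_mul]
    refine Finset.sum_congr rfl fun w _ => ?_
    split_ifs with h
    · rw [one_mul, h]
    · rw [zero_mul]
  simp_rw [count_mul]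
  exact (hasSum_sum fun w _ => hasSum_ite_eq (w (Fin.last n)) (f (w (Fin.last n)))).tsum_eq

end Walks

/-- The four steps `sqSteps` of the square lattice as a `Finset`. -/
def unitSteps : Finset (ℤ × ℤ) := {(1, 0), (-1, 0), (0, 1), (0, -1)}

theorem coe_unitSteps : (unitSteps : Set (ℤ × ℤ)) = sqSteps := by
  simp [unitSteps, sqSteps]

section Means

variable {E : Type*} [AddCommGroup E] [Module ℝ E]

/-- The transition operator `f ↦ (p ↦ 𝔼 f(p + ξ))` of the simple random walk. -/
noncomputable def stepMean (f : ℤ × ℤ → E) (p : ℤ × ℤ) : E :=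
  (1 / 4 : ℝ) • ∑ s ∈ unitSteps, f (p + s)

/-- `𝔼[f(Sₙ); τ > n]`, where `S` is the simple random walk started at the origin and `τ` is the
first time `≥ 1` at which `S` visits the half-line `slitH`. -/
noncomputable def aliveMean (n : ℕ) (f : ℤ × ℤ → E) : E :=
  (1 / 4 : ℝ) ^ n • ∑ w ∈ slitWalks unitSteps n, f (w (Fin.last n))

/-- `𝔼[f(Sₙ₊₁); τ = n + 1]`, in the notation of `aliveMean`. -/
noncomputable def exitMean (n : ℕ) (f : ℤ × ℤ → E) : E :=
  aliveMean n (stepMean (slitH.indicator f))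

/-- The survival probability `ℙ(τ > n)`. -/
noncomputable def survival (n : ℕ) : ℝ := aliveMean n fun _ => (1 : ℝ)

theorem stepMean_apply (f : ℤ × ℤ → E) (p : ℤ × ℤ) :
    stepMean f p = (1 / 4 : ℝ) •
      (f (p + (1, 0)) + (f (p + (-1, 0)) + (f (p + (0, 1)) + f (p + (0, -1))))) := by
  rw [stepMean, unitSteps, Finset.sum_insert (by decide), Finset.sum_insert (by decide),
    Finset.sum_insert (by decide), Finset.sum_singleton]

theorem stepMean_one : stepMean (fun _ => (1 : ℝ)) = fun _ => 1 := by
  ext p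
  norm_num [stepMean_apply]

theorem stepMean_add (f g : ℤ × ℤ → E) : stepMean (f + g) = stepMean f + stepMean g := by
  ext p
  simp [stepMean, Finset.sum_add_distrib]

theorem aliveMean_zero_left (f : ℤ × ℤ → E) : aliveMean 0 f = f (0, 0) := by
  simp [aliveMean, slitWalks_zero]

theorem aliveMean_add (n : ℕ) (f g : ℤ × ℤ → E) :
    aliveMean n (f + g) = aliveMean n f + aliveMean n g := by
  simp [aliveMean, Finset.sum_add_distrib]

theorem aliveMean_const_mul (n : ℕ) (c : ℂ) (f : ℤ × ℤ → ℂ) :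
    aliveMean n (fun p => c * f p) = c * aliveMean n f := by
  simp only [aliveMean, ← Finset.mul_sum, mul_smul_comm]

theorem aliveMean_succ (n : ℕ) (f : ℤ × ℤ → E) :
    aliveMean (n + 1) f = aliveMean n (stepMean (slitHᶜ.indicator f)) := by
  simp only [aliveMean, stepMean, sum_slitWalks_succ, ← Finset.smul_sum, smul_smul, pow_succ]

theorem aliveMean_stepMean (n : ℕ) (f : ℤ × ℤ → E) :
    aliveMean n (stepMean f) = aliveMean (n + 1) f + exitMean n f := by
  rw [aliveMean_succ, exitMean, ← aliveMean_add, ← stepMean_add, indicator_compl_add_self]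

theorem aliveMean_congr {f g : ℤ × ℤ → E} (h : EqOn f g (insert (0, 0) slitHᶜ)) (n : ℕ) :
    aliveMean n f = aliveMean n g := by
  rw [aliveMean, aliveMean]
  congr 1
  refine Finset.sum_congr rfl fun w hw => h ?_
  rw [mem_slitWalks] at hw
  rcases n.eq_zero_or_pos with rfl | hn
  · exact mem_insert_iff.mpr (.inl hw.1)
  · exact mem_insert_of_mem _ (hw.2.2 _ hn)

section Norm

variable {F : Type*} [NormedAddCommGroup F] [NormedSpace ℝ F] {f : ℤ × ℤ → F} {g : ℤ × ℤ → ℝ}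

theorem norm_stepMean_le (h : ∀ p, ‖f p‖ ≤ g p) (p : ℤ × ℤ) : ‖stepMean f p‖ ≤ stepMean g p := by
  rw [stepMean, stepMean, norm_smul, Real.norm_of_nonneg (by norm_num), smul_eq_mul]
  gcongr
  exact norm_sum_le_of_le _ fun s _ => h _

theorem norm_aliveMean_le (h : ∀ p, ‖f p‖ ≤ g p) (n : ℕ) :
    ‖aliveMean n f‖ ≤ aliveMean n g := by
  rw [aliveMean, aliveMean, norm_smul, Real.norm_of_nonneg (by positivity), smul_eq_mul]
  gcongr
  exact norm_sum_le_of_le _ fun w _ => h _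

theorem norm_exitMean_le (h : ∀ p, ‖f p‖ ≤ g p) (n : ℕ) : ‖exitMean n f‖ ≤ exitMean n g := by
  refine norm_aliveMean_le (norm_stepMean_le fun p => ?_) n
  by_cases hp : p ∈ slitH <;> simp [hp, h p]

theorem norm_stepMean_le_one (h : ∀ p, ‖f p‖ ≤ 1) (p : ℤ × ℤ) : ‖stepMean f p‖ ≤ 1 :=
  (norm_stepMean_le h p).trans_eq (congrFun stepMean_one p)

theorem norm_aliveMean_le_survival (h : ∀ p, ‖f p‖ ≤ 1) (n : ℕ) : ‖aliveMean n f‖ ≤ survival n :=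
  norm_aliveMean_le h n

theorem norm_exitMean_le_survival_sub (h : ∀ p, ‖f p‖ ≤ 1) (n : ℕ) :
    ‖exitMean n f‖ ≤ survival n - survival (n + 1) := by
  refine (norm_exitMean_le h n).trans_eq (eq_sub_of_add_eq' ?_)
  rw [survival, ← aliveMean_stepMean, stepMean_one, survival]

end Norm

theorem survival_zero : survival 0 = 1 := aliveMean_zero_left _

theorem survival_antitone : Antitone survival :=
  antitone_nat_of_succ_le fun n => sub_nonneg.mp <|
    (norm_nonneg _).trans (norm_exitMean_le_survival_sub (f := fun _ => (0 : ℝ)) (by simp) n)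

theorem survival_le_one (n : ℕ) : survival n ≤ 1 :=
  (survival_antitone n.zero_le).trans_eq survival_zero

theorem tsum_slitCount_mul_div_slitTotal (n : ℕ) (f : ℤ × ℤ → ℝ) :
    (∑' p : ℤ × ℤ, (slitCount sqSteps p.1 p.2 n : ℝ) * f p) / slitTotal sqSteps n =
      aliveMean n f / survival n := by
  rw [← coe_unitSteps, tsum_slitCount_mul, slitTotal_eq_card, survival, aliveMean, aliveMean,
    smul_eq_mul, smul_eq_mul, mul_div_mul_left _ _ (by positivity)]
  simp

theorem card_slitWalks_unitSteps_pos (n : ℕ) : 0 < (slitWalks unitSteps n).card := by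
  have hwalk : IsSlitWalk (unitSteps : Set (ℤ × ℤ)) n fun m => ((m : ℕ), 0) := by
    refine ⟨by simp, fun m => by simp [unitSteps], fun m hm hmem => ?_⟩
    have hle : ((m : ℕ) : ℤ) ≤ 0 := hmem.2
    omega
  exact Finset.card_pos.mpr ⟨_, mem_slitWalks.mpr hwalk⟩

theorem survival_eq_card (n : ℕ) :
    survival n = (1 / 4) ^ n * ((slitWalks unitSteps n).card : ℝ) := by
  simp [survival, aliveMean]

theorem survival_pos (n : ℕ) : 0 < survival n := by
  have := card_slitWalks_unitSteps_pos n
  rw [survival_eq_card]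
  positivity

end Means

/-! ### Generating functions -/

section GeneratingFunctions

/-- The generating function `∑ₙ tⁿ 𝔼[f(Sₙ); τ > n]`. -/
noncomputable def aliveGF (t : ℂ) (f : ℤ × ℤ → ℂ) : ℂ := ∑' n, t ^ n * aliveMean n f

/-- The generating function `𝔼[t^τ f(S_τ)]` of the exit time and position. -/
noncomputable def exitGF (t : ℂ) (f : ℤ × ℤ → ℂ) : ℂ :=
  t * aliveGF t (stepMean (slitH.indicator f))

variable {t : ℂ} {f g : ℤ × ℤ → ℂ}

theorem norm_pow_mul_aliveMean_le (hf : ∀ p, ‖f p‖ ≤ 1) (n : ℕ) :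
    ‖t ^ n * aliveMean n f‖ ≤ ‖t‖ ^ n := by
  rw [norm_mul, norm_pow]
  exact mul_le_of_le_one_right (by positivity)
    ((norm_aliveMean_le_survival hf n).trans (survival_le_one n))

theorem summable_pow_mul_aliveMean (ht : ‖t‖ < 1) (hf : ∀ p, ‖f p‖ ≤ 1) :
    Summable fun n => t ^ n * aliveMean n f :=
  .of_norm_bounded (summable_geometric_of_lt_one (norm_nonneg t) ht) (norm_pow_mul_aliveMean_le hf)

theorem norm_aliveGF_le (ht : ‖t‖ < 1) (hf : ∀ p, ‖f p‖ ≤ 1) : ‖aliveGF t f‖ ≤ (1 - ‖t‖)⁻¹ :=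
  tsum_of_norm_bounded (hasSum_geometric_of_lt_one (norm_nonneg t) ht)
    (norm_pow_mul_aliveMean_le hf)

theorem aliveGF_const_mul (c : ℂ) : aliveGF t (fun p => c * f p) = c * aliveGF t f := by
  simp only [aliveGF, aliveMean_const_mul, mul_left_comm _ c, tsum_mul_left]

theorem aliveGF_add (ht : ‖t‖ < 1) (hf : ∀ p, ‖f p‖ ≤ 1) (hg : ∀ p, ‖g p‖ ≤ 1) :
    aliveGF t (f + g) = aliveGF t f + aliveGF t g := by
  simp only [aliveGF, aliveMean_add, mul_add]
  exact (summable_pow_mul_aliveMean ht hf).tsum_add (summable_pow_mul_aliveMean ht hg)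

theorem aliveGF_eq_exitGF (ht : ‖t‖ < 1) (hf : ∀ p, ‖f p‖ ≤ 1) :
    aliveGF t f = f (0, 0) + t * aliveGF t (stepMean f) - exitGF t f := by
  have hind (p : ℤ × ℤ) : ‖slitH.indicator f p‖ ≤ 1 :=
    (norm_indicator_le_norm_self f p).trans (hf p)
  have hsub : t * aliveGF t (stepMean f) - exitGF t f =
      ∑' n, t ^ (n + 1) * aliveMean (n + 1) f := by
    rw [exitGF, ← mul_sub, aliveGF, aliveGF, ← Summable.tsum_sub
      (summable_pow_mul_aliveMean ht (norm_stepMean_le_one hf))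
      (summable_pow_mul_aliveMean ht (norm_stepMean_le_one hind)), ← tsum_mul_left]
    congr 1 with n
    rw [aliveMean_stepMean, exitMean]
    ring
  rw [add_sub_assoc, hsub, aliveGF, (summable_pow_mul_aliveMean ht hf).tsum_eq_zero_add,
    aliveMean_zero_left, pow_zero, one_mul]

theorem diffContOnCl_tsum {F : ℕ → ℂ → ℂ} {u : ℕ → ℝ} {c : ℂ} {r : ℝ} (hu : Summable u)
    (hF : ∀ n, Differentiable ℂ (F n)) (hFu : ∀ n, ∀ z ∈ Metric.closedBall c r, ‖F n z‖ ≤ u n) :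
    DiffContOnCl ℂ (fun z => ∑' n, F n z) (Metric.ball c r) where
  differentiableOn := Complex.differentiableOn_tsum_of_summable_norm hu
    (fun n => (hF n).differentiableOn) Metric.isOpen_ball
    fun n z hz => hFu n z (Metric.ball_subset_closedBall hz)
  continuousOn := (continuousOn_tsum (fun n => (hF n).continuous.continuousOn) hu hFu).mono
    Metric.closure_ball_subset_closedBall

theorem diffContOnCl_aliveGF {f : ℂ → ℤ × ℤ → ℂ} {c : ℂ} {r : ℝ} (ht : ‖t‖ < 1)
    (hf : ∀ p, Differentiable ℂ fun z => f z p)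
    (hf₁ : ∀ z ∈ Metric.closedBall c r, ∀ p, ‖f z p‖ ≤ 1) :
    DiffContOnCl ℂ (fun z => aliveGF t (f z)) (Metric.ball c r) := by
  refine diffContOnCl_tsum (summable_geometric_of_lt_one (norm_nonneg t) ht) (fun n => ?_)
    fun n z hz => norm_pow_mul_aliveMean_le (hf₁ z hz) n
  simp only [aliveMean]
  fun_prop

theorem diffContOnCl_exitGF {f : ℂ → ℤ × ℤ → ℂ} {c : ℂ} {r : ℝ} (ht : ‖t‖ < 1)
    (hf : ∀ p, Differentiable ℂ fun z => f z p)
    (hf₁ : ∀ z ∈ Metric.closedBall c r, ∀ p, ‖f z p‖ ≤ 1) :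
    DiffContOnCl ℂ (fun z => exitGF t (f z)) (Metric.ball c r) := by
  have hind (p : ℤ × ℤ) : Differentiable ℂ fun z => slitH.indicator (f z) p := by
    by_cases hp : p ∈ slitH <;> simp [hp, hf p]
  refine (diffContOnCl_aliveGF ht (fun p => ?_) fun z hz =>
    norm_stepMean_le_one fun p => (norm_indicator_le_norm_self _ p).trans (hf₁ z hz p)).const_smul t
  simp only [stepMean]
  fun_prop

end GeneratingFunctions

/-! ### The kernel equation -/

section Kernel

/-- The character `(i, j) ↦ zⁱ wʲ` of `ℤ²`. -/
noncomputable def character (z w : ℂ) (p : ℤ × ℤ) : ℂ := z ^ p.1 * w ^ p.2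

/-- The function `(i, k) ↦ zⁱ` on the row `k = j`, extended by `0`. -/
noncomputable def rowCharacter (z : ℂ) (j : ℤ) (p : ℤ × ℤ) : ℂ := if p.2 = j then z ^ p.1 else 0

/-- `1 - 𝔼[t^τ z^|S_τ|]`; natural powers make it analytic in the unit disc. -/
noncomputable def boundaryGF (t z : ℂ) : ℂ := 1 - exitGF t fun p => z ^ (-p.1).toNat

/-- The generating function of the walks ending on the positive `x`-axis or at the origin, with
`z` marking the abscissa. -/
noncomputable def axisGF (t z : ℂ) : ℂ := aliveGF t fun p => if p.2 = 0 then z ^ p.1.toNat else 0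

variable {z w : ℂ}

theorem inv_add_self_of_norm_eq_one (hz : ‖z‖ = 1) : z + z⁻¹ = 2 * z.re := by
  rw [Complex.inv_eq_conj hz, Complex.add_conj]
  push_cast
  rfl

theorem norm_character (hz : ‖z‖ = 1) (hw : ‖w‖ = 1) (p : ℤ × ℤ) : ‖character z w p‖ = 1 := by
  simp [character, hz, hw]

theorem norm_rowCharacter_le (hz : ‖z‖ = 1) (j : ℤ) (p : ℤ × ℤ) : ‖rowCharacter z j p‖ ≤ 1 := by
  unfold rowCharacter
  split_ifs <;> simp [hz]

theorem stepMean_character (hz : ‖z‖ = 1) (hw : ‖w‖ = 1) :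
    stepMean (character z w) = fun p => ((z.re + w.re) / 2 : ℝ) * character z w p := by
  have hz₀ : z ≠ 0 := norm_ne_zero_iff.mp (hz ▸ one_ne_zero)
  have hw₀ : w ≠ 0 := norm_ne_zero_iff.mp (hw ▸ one_ne_zero)
  ext p
  simp only [stepMean_apply, character, Prod.fst_add, Prod.snd_add, add_zero, zpow_add₀ hz₀,
    zpow_add₀ hw₀, zpow_one, zpow_neg_one, Complex.real_smul]
  push_cast
  linear_combination z ^ p.1 * w ^ p.2 / 4 *
    (inv_add_self_of_norm_eq_one hz + inv_add_self_of_norm_eq_one hw)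

theorem stepMean_rowCharacter (hz : ‖z‖ = 1) (j : ℤ) :
    stepMean (rowCharacter z j) = (fun p => (z.re / 2 : ℂ) * rowCharacter z j p) +
      fun p => (1 / 4 : ℂ) * (rowCharacter z (j - 1) + rowCharacter z (j + 1)) p := by
  have hz₀ : z ≠ 0 := norm_ne_zero_iff.mp (hz ▸ one_ne_zero)
  have horiz (p : ℤ × ℤ) (k : ℤ) :
      rowCharacter z j (p + (k, 0)) = z ^ k * rowCharacter z j p := by
    simp [rowCharacter, zpow_add₀ hz₀, mul_comm]
  have vert (p : ℤ × ℤ) (k : ℤ) : rowCharacter z j (p + (0, k)) = rowCharacter z (j - k) p := by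
    simp [rowCharacter, eq_sub_iff_add_eq]
  ext p
  simp only [stepMean_apply, horiz, vert, Pi.add_apply, Complex.real_smul, zpow_one, zpow_neg_one,
    sub_neg_eq_add]
  push_cast
  linear_combination rowCharacter z j p / 4 * inv_add_self_of_norm_eq_one hz

theorem exitGF_congr {t : ℂ} {f g : ℤ × ℤ → ℂ} (h : EqOn f g slitH) :
    exitGF t f = exitGF t g := by
  rw [exitGF, exitGF, indicator_congr h]

theorem zpow_eq_conj_pow_toNat (hz : ‖z‖ = 1) {k : ℤ} (hk : k ≤ 0) :
    z ^ k = conj z ^ (-k).toNat := by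
  rw [← Complex.inv_eq_conj hz, ← zpow_natCast, Int.toNat_of_nonneg (by lia), inv_zpow', neg_neg]

theorem exitGF_character {t : ℂ} (hz : ‖z‖ = 1) :
    exitGF t (character z w) = 1 - boundaryGF t (conj z) := by
  rw [boundaryGF, sub_sub_cancel]
  refine exitGF_congr ?_
  rintro ⟨i, j⟩ ⟨rfl, hi⟩
  simp [character, zpow_eq_conj_pow_toNat hz hi]

theorem exitGF_rowCharacter {t : ℂ} (hz : ‖z‖ = 1) (j : ℤ) :
    exitGF t (rowCharacter z j) = if j = 0 then 1 - boundaryGF t (conj z) else 0 := by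
  split_ifs with hj
  · rw [boundaryGF, sub_sub_cancel]
    refine exitGF_congr ?_
    rintro ⟨i, k⟩ ⟨rfl, hi⟩
    simp [rowCharacter, hj, zpow_eq_conj_pow_toNat hz hi]
  · have : EqOn (rowCharacter z j) 0 slitH := by
      rintro ⟨i, k⟩ ⟨rfl, -⟩
      simp [rowCharacter, Ne.symm hj]
    rw [exitGF_congr this]
    simp [exitGF, aliveGF, stepMean, aliveMean]

theorem kernel_mul_aliveGF_character {t : ℂ} (ht : ‖t‖ < 1) (hz : ‖z‖ = 1) (hw : ‖w‖ = 1) :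
    (1 - t * ((z.re + w.re) / 2 : ℝ)) * aliveGF t (character z w) = boundaryGF t (conj z) := by
  have h := aliveGF_eq_exitGF ht fun p => (norm_character hz hw p).le
  rw [stepMean_character hz hw, aliveGF_const_mul, exitGF_character hz] at h
  have h₀ : character z w (0, 0) = 1 := by simp [character]
  linear_combination h + h₀

theorem aliveGF_rowCharacter_recurrence {t : ℂ} (ht : ‖t‖ < 1) (hz : ‖z‖ = 1) (j : ℤ) :
    (1 - t * z.re / 2) * aliveGF t (rowCharacter z j) - t / 4 *
      (aliveGF t (rowCharacter z (j - 1)) + aliveGF t (rowCharacter z (j + 1))) =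
      if j = 0 then boundaryGF t (conj z) else 0 := by
  have hrow := norm_rowCharacter_le hz
  have hre : ‖(z.re / 2 : ℂ)‖ ≤ 1 := by
    rw [norm_div, Complex.norm_real, Complex.norm_ofNat]
    linarith [z.abs_re_le_norm, Real.norm_eq_abs z.re]
  have h := aliveGF_eq_exitGF ht (hrow j)
  rw [stepMean_rowCharacter hz, exitGF_rowCharacter hz, aliveGF_add ht, aliveGF_const_mul,
    aliveGF_const_mul, aliveGF_add ht (hrow _) (hrow _)] at h
  · have h₀ : rowCharacter z j (0, 0) = if j = 0 then 1 else 0 := by simp [rowCharacter, eq_comm]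
    rw [h₀] at h
    split_ifs at h ⊢ <;> linear_combination h
  · intro p
    rw [norm_mul]
    exact mul_le_one₀ hre (norm_nonneg _) (hrow j p)
  · intro p
    rw [norm_mul, Pi.add_apply]
    have := norm_add_le_of_le (hrow (j - 1) p) (hrow (j + 1) p)
    norm_num at this ⊢
    linarith

-- The characteristic roots are `q` and `1 / q`; boundedness excludes the second.
theorem eq_mul_of_bounded_recurrence {q C : ℝ} (hq₀ : 0 < q) (hq₁ : q < 1) {g : ℕ → ℂ}
    (hg : ∀ n, ‖g n‖ ≤ C) (hrec : ∀ n, q * (g n + g (n + 2)) = (q ^ 2 + 1) * g (n + 1)) :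
    g 1 = q * g 0 := by
  have const (n : ℕ) : q ^ n * (g (n + 1) - q * g n) = g 1 - q * g 0 := by
    induction n with
    | zero => simp
    | succ n ih =>
      rw [← ih, pow_succ]
      linear_combination (q : ℂ) ^ n * hrec n
  have vanish : Tendsto (fun n => (q : ℂ) ^ n * (g (n + 1) - q * g n)) atTop (𝓝 0) := by
    refine squeeze_zero_norm (a := fun n => q ^ n * (C + q * C)) (fun n => ?_)
      (by simpa using (tendsto_pow_atTop_nhds_zero_of_lt_one hq₀.le hq₁).mul_const (C + q * C))
    rw [norm_mul, norm_pow, Complex.norm_real, Real.norm_of_nonneg hq₀.le]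
    gcongr
    refine norm_sub_le_of_le (hg _) ?_
    rw [norm_mul, Complex.norm_real, Real.norm_of_nonneg hq₀.le]
    gcongr
    exact hg n
  simp only [const, tendsto_const_nhds_iff] at vanish
  exact sub_eq_zero.mp vanish

theorem exists_decay_rate {m s : ℝ} (hs : 0 < s) (hsm : s < m) :
    ∃ q : ℝ, 0 < q ∧ q < 1 ∧ s * (q ^ 2 + 1) = 2 * m * q ∧ s * q = m - √(m ^ 2 - s ^ 2) := by
  have hpos : 0 < m ^ 2 - s ^ 2 := by nlinarith
  have hsq := Real.sq_sqrt hpos.le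
  have hr := Real.sqrt_pos.mpr hpos
  have hrm : √(m ^ 2 - s ^ 2) < m := by nlinarith
  refine ⟨(m - √(m ^ 2 - s ^ 2)) / s, div_pos (by linarith) hs, ?_, ?_, by field_simp⟩
  · rw [div_lt_one hs]
    nlinarith
  · field_simp
    linear_combination hsq

theorem sqrt_kernel_mul_aliveGF_rowCharacter {t : ℝ} (ht₀ : 0 < t) (ht₁ : t < 1) (hz : ‖z‖ = 1) :
    (√((1 - t * z.re / 2) ^ 2 - (t / 2) ^ 2) : ℂ) * aliveGF t (rowCharacter z 0) =
      boundaryGF t (conj z) := by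
  have ht : ‖(t : ℂ)‖ < 1 := by rwa [Complex.norm_real, Real.norm_of_nonneg ht₀.le]
  have hre : z.re ≤ 1 := hz ▸ z.re_le_norm
  obtain ⟨q, hq₀, hq₁, hroot, hgap⟩ :=
    exists_decay_rate (m := 1 - t * z.re / 2) (half_pos ht₀) (by nlinarith)
  have hrootC : (t : ℂ) / 2 * (q ^ 2 + 1) = 2 * (1 - t * z.re / 2) * q := by exact_mod_cast hroot
  have hgapC : (t : ℂ) / 2 * q = 1 - t * z.re / 2 - √((1 - t * z.re / 2) ^ 2 - (t / 2) ^ 2) := by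
    exact_mod_cast hgap
  have ht' : (t : ℂ) / 2 ≠ 0 := by exact_mod_cast (half_pos ht₀).ne'
  set G : ℤ → ℂ := fun j => aliveGF t (rowCharacter z j)
  have hG (j : ℤ) : ‖G j‖ ≤ (1 - ‖(t : ℂ)‖)⁻¹ := norm_aliveGF_le ht (norm_rowCharacter_le hz j)
  have hrec (j : ℤ) := aliveGF_rowCharacter_recurrence ht hz j
  have geometric (j : ℤ) (hj : j ≠ 0) : q * (G (j - 1) + G (j + 1)) = (q ^ 2 + 1) * G j := by
    have h := hrec j
    rw [if_neg hj] at h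
    refine mul_left_cancel₀ ht' ?_
    linear_combination (-2 * (q : ℂ)) * h - G j * hrootC
  have up : G 1 = q * G 0 :=
    eq_mul_of_bounded_recurrence hq₀ hq₁ (g := fun n => G n) (fun n => hG n) fun n => by
      have h := geometric (n + 1) (by lia)
      rw [add_sub_cancel_right, add_assoc] at h
      exact_mod_cast h
  have down : G (-1) = q * G 0 :=
    eq_mul_of_bounded_recurrence hq₀ hq₁ (g := fun n => G (-n)) (fun n => hG _) fun n => by
      have h := geometric (-(n + 1)) (by lia)
      rw [add_comm (G _), neg_add', sub_add_cancel, sub_sub, ← neg_add', ← neg_add'] at h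
      exact_mod_cast h
  have h := hrec 0
  rw [if_pos rfl, zero_sub, zero_add] at h
  linear_combination h + G 0 * hgapC + (t : ℂ) / 4 * (up + down)

theorem aliveGF_rowCharacter_zero (t : ℂ) : aliveGF t (rowCharacter z 0) = axisGF t z := by
  have heq : EqOn (rowCharacter z 0) (fun p => if p.2 = 0 then z ^ p.1.toNat else 0)
      (insert (0, 0) slitHᶜ) := by
    rintro ⟨i, j⟩ hij
    by_cases hj : j = 0
    · have hi : 0 ≤ i := by
        rcases hij with h | h
        · exact (congrArg Prod.fst h).ge
        · simp only [slitH, hj, mem_compl_iff, mem_ofPred_eq, true_and, not_le] at h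
          exact h.le
      lift i to ℕ using hi
      simp [rowCharacter, hj]
    · simp [rowCharacter, hj]
  simp only [aliveGF, axisGF, aliveMean_congr heq]

theorem axisGF_zero (t : ℂ) : axisGF t 0 = 1 := by
  have hind : slitHᶜ.indicator (fun p : ℤ × ℤ => if p.2 = 0 then (0 : ℂ) ^ p.1.toNat else 0) = 0 :=
    indicator_eq_zero.mpr <| disjoint_left.mpr fun p hp hpH => hpH <| by
      by_contra hpH'
      simp [slitH] at hp hpH'
      lia
  rw [axisGF, aliveGF, tsum_eq_single 0 fun n hn => ?_, pow_zero, one_mul, aliveMean_zero_left]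
  · simp
  · obtain ⟨k, rfl⟩ := Nat.exists_eq_succ_of_ne_zero hn
    rw [Nat.succ_eq_add_one, aliveMean_succ, hind]
    simp [stepMean, aliveMean]

theorem conj_axisGF (t : ℝ) (z : ℂ) : conj (axisGF t z) = axisGF t (conj z) := by
  simp only [axisGF, aliveGF, Complex.conj_tsum, aliveMean, Complex.real_smul, map_mul, map_pow,
    map_sum, apply_ite conj, Complex.conj_ofReal, map_zero]

variable {t : ℂ}

theorem diffContOnCl_boundaryGF (ht : ‖t‖ < 1) :
    DiffContOnCl ℂ (boundaryGF t) (Metric.ball 0 1) :=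
  (diffContOnCl_exitGF ht (fun _ => differentiable_pow _) fun z hz _ => (norm_pow_le _ _).trans
    (pow_le_one₀ (norm_nonneg z) (mem_closedBall_zero_iff.mp hz))).const_sub 1

theorem diffContOnCl_axisGF (ht : ‖t‖ < 1) : DiffContOnCl ℂ (axisGF t) (Metric.ball 0 1) := by
  refine diffContOnCl_aliveGF ht (fun _ => ?_) fun z hz _ => ?_
  · split_ifs <;> fun_prop
  · split_ifs
    · rw [norm_pow]
      exact pow_le_one₀ (norm_nonneg z) (mem_closedBall_zero_iff.mp hz)
    · simp

end Kernel

/-! ### Wiener–Hopf factorization of the kernel -/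

section WienerHopf

theorem eq_zero_of_circleAverage_eq_zero {f : ℂ → ℝ} {c : ℂ} {R : ℝ} (hR : 0 < R)
    (hf : ContinuousOn f (Metric.sphere c R)) (hf₀ : ∀ z ∈ Metric.sphere c R, 0 ≤ f z)
    (h : Real.circleAverage f c R = 0) : ∀ z ∈ Metric.sphere c R, f z = 0 := by
  have hcircle (θ : ℝ) : circleMap c R θ ∈ Metric.sphere c R := circleMap_mem_sphere c hR.le θ
  intro z hz
  obtain ⟨θ, hθ, rfl⟩ : z ∈ circleMap c R '' Ioc 0 (2 * Real.pi) := by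
    rwa [image_circleMap_Ioc, abs_of_pos hR]
  by_contra hne
  have hpos := intervalIntegral.integral_pos Real.two_pi_pos
    (hf.comp_continuous (continuous_circleMap c R) hcircle).continuousOn
    (fun θ _ => hf₀ _ (hcircle θ)) ⟨θ, Ioc_subset_Icc_self hθ, (hf₀ _ hz).lt_of_ne' hne⟩
  rw [Real.circleAverage, smul_eq_mul] at h
  exact (mul_pos (inv_pos.mpr Real.two_pi_pos) hpos).ne' h

theorem eq_apply_zero_of_conj_on_circle {P Q : ℂ → ℂ} (hP : DiffContOnCl ℂ P (Metric.ball 0 1))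
    (hQ : DiffContOnCl ℂ Q (Metric.ball 0 1)) (hPQ : ∀ z, ‖z‖ = 1 → Q z = conj (P z)) {z : ℂ}
    (hz : ‖z‖ = 1) : P z = P 0 := by
  have havg := DiffContOnCl.circleAverage (R := 1) (c := 0)
    (f := fun z => (P z - P 0) * (Q z - conj (P 0)))
    (by simpa using (hP.sub_const _).smul (hQ.sub_const _))
  have hnorm (w : ℂ) (hw : w ∈ Metric.sphere 0 |(1 : ℝ)|) :
      (P w - P 0) * (Q w - conj (P 0)) = ((‖P w - P 0‖ ^ 2 : ℝ) : ℂ) := by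
    rw [hPQ w (by simpa using hw), ← map_sub, Complex.mul_conj', Complex.ofReal_pow]
  rw [Real.circleAverage_congr_sphere hnorm, sub_self, zero_mul] at havg
  have havg' : Real.circleAverage (fun w => ‖P w - P 0‖ ^ 2) 0 1 = 0 := by
    rw [Real.circleAverage, intervalIntegral.integral_ofReal, Complex.real_smul] at havg
    rw [Real.circleAverage, smul_eq_mul]
    exact_mod_cast havg
  have hcont : ContinuousOn P (Metric.sphere 0 1) := hP.continuousOn.mono <| by
    rw [closure_ball _ one_ne_zero]
    exact Metric.sphere_subset_closedBall
  have := eq_zero_of_circleAverage_eq_zero one_pos ((hcont.sub continuousOn_const).norm.pow 2)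
    (fun _ _ => sq_nonneg _) havg' z (by simpa using hz)
  simpa [sub_eq_zero] using this

/-- The map `s ↦ (1 - s) / (1 + s)`. -/
noncomputable def cayley (s : ℝ) : ℝ := (1 - s) / (1 + s)

/-- The principal branch of `√(1 - c z)`. -/
noncomputable def sqrtFactor (c : ℝ) (z : ℂ) : ℂ := (1 - c * z) ^ (1 / 2 : ℂ)

variable {s c : ℝ} {z : ℂ}

theorem abs_cayley_lt_one (hs : 0 < s) : |cayley s| < 1 := by
  rw [cayley, abs_div, abs_of_pos (by linarith : 0 < 1 + s), div_lt_one (by linarith), abs_lt]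
  constructor <;> linarith

theorem one_sub_mul_re_pos (hc : |c| < 1) (hz : ‖z‖ ≤ 1) : 0 < (1 - c * z).re := by
  have h := (le_abs_self _).trans (Complex.abs_re_le_norm (c * z))
  rw [norm_mul, Complex.norm_real, Real.norm_eq_abs] at h
  rw [Complex.sub_re, Complex.one_re]
  linarith [mul_le_of_le_one_right (abs_nonneg c) hz]

theorem cpow_half_sq (w : ℂ) : (w ^ (1 / 2 : ℂ)) ^ 2 = w := by
  simp [one_div]

theorem sqrtFactor_ne_zero (hc : |c| < 1) (hz : ‖z‖ ≤ 1) : sqrtFactor c z ≠ 0 := by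
  have hre := one_sub_mul_re_pos hc hz
  rw [← cpow_half_sq (1 - c * z), ← sqrtFactor] at hre
  intro h
  simp [h] at hre

theorem differentiableAt_sqrtFactor (hc : |c| < 1) (hz : ‖z‖ ≤ 1) :
    DifferentiableAt ℂ (sqrtFactor c) z :=
  .cpow_const (by fun_prop) (.inl (one_sub_mul_re_pos hc hz))

theorem sqrtFactor_conj (hc : |c| < 1) (hz : ‖z‖ ≤ 1) :
    sqrtFactor c (conj z) = conj (sqrtFactor c z) := by
  have harg : (1 - c * z).arg ≠ Real.pi :=
    Complex.slitPlane_arg_ne_pi (.inl (one_sub_mul_re_pos hc hz))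
  simpa [sqrtFactor, map_ofNat] using Complex.conj_cpow _ (1 / 2) harg

theorem sqrtFactor_mul_conj (c : ℝ) (z : ℂ) :
    sqrtFactor c z * conj (sqrtFactor c z) = ‖1 - c * z‖ := by
  rw [Complex.mul_conj', sqrtFactor, ← Complex.ofReal_pow, ← norm_pow, cpow_half_sq]

theorem norm_one_sub_mul_sq (c : ℝ) (hz : ‖z‖ = 1) :
    ‖1 - c * z‖ ^ 2 = 1 + c ^ 2 - 2 * c * z.re := by
  have hz' : z.re * z.re + z.im * z.im = 1 := by
    rw [← Complex.normSq_apply, Complex.normSq_eq_norm_sq, hz, one_pow]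
  rw [← Complex.normSq_eq_norm_sq, Complex.normSq_apply]
  simp only [Complex.sub_re, Complex.one_re, Complex.re_ofReal_mul, Complex.sub_im, Complex.one_im,
    Complex.im_ofReal_mul]
  linear_combination c ^ 2 * hz'

theorem norm_one_sub_cayley_mul_sq (hs : 0 < s) (hz : ‖z‖ = 1) :
    ((1 + s) / 2 * ‖1 - cayley s * z‖) ^ 2 = (1 + s ^ 2 - (1 - s ^ 2) * z.re) / 2 := by
  rw [mul_pow, norm_one_sub_mul_sq _ hz, cayley]
  field_simp
  ring

/-- The factor `W` of the Wiener–Hopf factorization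
`kernelConst t * W(z) W(z̄) = √((1 - t Re z / 2)² - (t / 2)²)` of the kernel on the unit circle. -/
noncomputable def kernelFactor (t : ℝ) (z : ℂ) : ℂ :=
  sqrtFactor (cayley √(1 - t)) z * sqrtFactor (-cayley √(1 + t)) z

/-- The normalizing constant of `kernelFactor`. -/
noncomputable def kernelConst (t : ℝ) : ℝ := (1 + √(1 - t)) / 2 * ((1 + √(1 + t)) / 2)

variable {t : ℝ}

theorem abs_cayley_sqrt_one_sub_lt (ht₁ : t < 1) : |cayley √(1 - t)| < 1 :=
  abs_cayley_lt_one (Real.sqrt_pos.mpr (by linarith))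

theorem abs_neg_cayley_sqrt_one_add_lt (ht₀ : 0 < t) : |-cayley √(1 + t)| < 1 := by
  rw [abs_neg]
  exact abs_cayley_lt_one (Real.sqrt_pos.mpr (by linarith))

theorem kernelConst_ne_zero (t : ℝ) : kernelConst t ≠ 0 := by
  unfold kernelConst
  positivity

theorem kernelFactor_ne_zero (ht₀ : 0 < t) (ht₁ : t < 1) (hz : ‖z‖ ≤ 1) : kernelFactor t z ≠ 0 :=
  mul_ne_zero (sqrtFactor_ne_zero (abs_cayley_sqrt_one_sub_lt ht₁) hz)
    (sqrtFactor_ne_zero (abs_neg_cayley_sqrt_one_add_lt ht₀) hz)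

theorem differentiableAt_kernelFactor (ht₀ : 0 < t) (ht₁ : t < 1) (hz : ‖z‖ ≤ 1) :
    DifferentiableAt ℂ (kernelFactor t) z :=
  (differentiableAt_sqrtFactor (abs_cayley_sqrt_one_sub_lt ht₁) hz).mul
    (differentiableAt_sqrtFactor (abs_neg_cayley_sqrt_one_add_lt ht₀) hz)

theorem kernelFactor_conj (ht₀ : 0 < t) (ht₁ : t < 1) (hz : ‖z‖ ≤ 1) :
    kernelFactor t (conj z) = conj (kernelFactor t z) := by
  rw [kernelFactor, kernelFactor, map_mul,
    sqrtFactor_conj (abs_cayley_sqrt_one_sub_lt ht₁) hz,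
    sqrtFactor_conj (abs_neg_cayley_sqrt_one_add_lt ht₀) hz]

theorem kernelFactor_zero (t : ℝ) : kernelFactor t 0 = 1 := by
  simp [kernelFactor, sqrtFactor]

theorem sqrt_kernel_eq_kernelFactor (ht₀ : 0 < t) (ht₁ : t < 1) (hz : ‖z‖ = 1) :
    (√((1 - t * z.re / 2) ^ 2 - (t / 2) ^ 2) : ℂ) =
      kernelConst t * (kernelFactor t z * conj (kernelFactor t z)) := by
  have hsub : √(1 - t) ^ 2 = 1 - t := Real.sq_sqrt (by linarith)
  have hadd : √(1 + t) ^ 2 = 1 + t := Real.sq_sqrt (by linarith)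
  have hfac₁ := norm_one_sub_cayley_mul_sq (Real.sqrt_pos.mpr (by linarith : 0 < 1 - t)) hz
  have hfac₂ := norm_one_sub_cayley_mul_sq (z := -z)
    (Real.sqrt_pos.mpr (by linarith : 0 < 1 + t)) (by rwa [norm_neg])
  have hsqrt : √((1 - t * z.re / 2) ^ 2 - (t / 2) ^ 2) =
      (1 + √(1 - t)) / 2 * ‖1 - cayley √(1 - t) * z‖ *
        ((1 + √(1 + t)) / 2 * ‖1 - cayley √(1 + t) * -z‖) := by
    refine (Real.sqrt_eq_iff_mul_self_eq ?_ (by positivity)).mpr ?_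
    · have : t * z.re ≤ t * 1 := mul_le_mul_of_nonneg_left (hz ▸ z.re_le_norm) ht₀.le
      exact sub_nonneg.mpr (pow_le_pow_left₀ (half_pos ht₀).le (by linarith) 2)
    · rw [← sq, mul_pow, hfac₁, hfac₂, hsub, hadd, Complex.neg_re]
      ring
  rw [hsqrt, kernelFactor, map_mul, mul_mul_mul_comm (sqrtFactor _ z), sqrtFactor_mul_conj,
    sqrtFactor_mul_conj, kernelConst]
  push_cast
  rw [mul_neg, neg_mul]
  ring

theorem axisGF_mul_kernelFactor (ht₀ : 0 < t) (ht₁ : t < 1) (hz : ‖z‖ = 1) :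
    kernelConst t * (axisGF t z * kernelFactor t z) * kernelFactor t (conj z) =
      boundaryGF t (conj z) := by
  rw [← sqrt_kernel_mul_aliveGF_rowCharacter ht₀ ht₁ hz, aliveGF_rowCharacter_zero,
    sqrt_kernel_eq_kernelFactor ht₀ ht₁ hz, kernelFactor_conj ht₀ ht₁ hz.le]
  ring

theorem boundaryGF_eq (ht₀ : 0 < t) (ht₁ : t < 1) (hz : ‖z‖ = 1) :
    boundaryGF t z = kernelConst t * kernelFactor t z := by
  have ht : ‖(t : ℂ)‖ < 1 := by rwa [Complex.norm_real, Real.norm_of_nonneg ht₀.le]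
  have hκ : (kernelConst t : ℂ) ≠ 0 := by exact_mod_cast kernelConst_ne_zero t
  have hz' : ‖conj z‖ = 1 := by rwa [RCLike.norm_conj]
  have hdiff (g : ℂ → ℂ) (hg : ∀ w, ‖w‖ ≤ 1 → DifferentiableAt ℂ g w) :
      DiffContOnCl ℂ g (Metric.ball 0 1) := by
    refine DifferentiableOn.diffContOnCl fun w hw => (hg w ?_).differentiableWithinAt
    simpa using Metric.closure_ball_subset_closedBall hw
  have key (w : ℂ) (hw : ‖w‖ = 1) : boundaryGF t w * (kernelConst t * kernelFactor t w)⁻¹ =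
      axisGF t (conj w) * kernelFactor t (conj w) := by
    have h := axisGF_mul_kernelFactor ht₀ ht₁ (z := conj w) (by rwa [RCLike.norm_conj])
    rw [Complex.conj_conj] at h
    rw [← h]
    field_simp [kernelFactor_ne_zero ht₀ ht₁ hw.le]
  have hconst := eq_apply_zero_of_conj_on_circle (P := fun w => axisGF t w * kernelFactor t w)
    (Q := fun w => boundaryGF t w * (kernelConst t * kernelFactor t w)⁻¹)
    ((diffContOnCl_axisGF ht).smul
      (hdiff _ fun w hw => differentiableAt_kernelFactor ht₀ ht₁ hw))
    ((diffContOnCl_boundaryGF ht).smul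
      (hdiff _ fun w hw => ((differentiableAt_kernelFactor ht₀ ht₁ hw).const_mul _).inv
        (mul_ne_zero hκ (kernelFactor_ne_zero ht₀ ht₁ hw))))
    (fun w hw => by rw [key w hw, map_mul, conj_axisGF, kernelFactor_conj ht₀ ht₁ hw.le]) hz'
  have h := axisGF_mul_kernelFactor ht₀ ht₁ hz'
  rw [Complex.conj_conj, hconst, axisGF_zero, kernelFactor_zero, mul_one, mul_one] at h
  exact h.symm

end WienerHopf

/-! ### Diffusive scaling of the kernel equation -/

section Scaling

/-- The point `e^{ia/√N}` of the unit circle. -/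
noncomputable def phase (a : ℝ) (N : ℕ) : ℂ := Complex.exp ((a / √N : ℝ) * Complex.I)

/-- The weight `e^{-l/N}`, a generating-function variable near the critical value `1`. -/
noncomputable def damping (l : ℝ) (N : ℕ) : ℝ := Real.exp (-l / N)

/-- The constant in the limit of the boundary generating function near its critical point. -/
noncomputable def scalingConst : ℝ := kernelConst 1 * √(1 + cayley √2)

variable {l : ℝ} (a b : ℝ)

theorem tendsto_inv_natCast_punctured : Tendsto (fun N : ℕ => (N : ℝ)⁻¹) atTop (𝓝[≠] 0) :=
  (tendsto_inv_atTop_nhdsGT_zero.comp tendsto_natCast_atTop_atTop).mono_right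
    (nhdsGT_le_nhdsNE 0)

theorem tendsto_sqrt_natCast : Tendsto (fun N : ℕ => √(N : ℝ)) atTop atTop :=
  Real.tendsto_sqrt_atTop.comp tendsto_natCast_atTop_atTop

theorem tendsto_inv_sqrt_natCast_punctured : Tendsto (fun N : ℕ => (√(N : ℝ))⁻¹) atTop (𝓝[≠] 0) :=
  (tendsto_inv_atTop_nhdsGT_zero.comp tendsto_sqrt_natCast).mono_right
    (nhdsGT_le_nhdsNE 0)

theorem norm_phase (N : ℕ) : ‖phase a N‖ = 1 := Complex.norm_exp_ofReal_mul_I _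

theorem phase_re (N : ℕ) : (phase a N).re = Real.cos (a / √N) := Complex.exp_ofReal_mul_I_re _

theorem conj_phase (N : ℕ) : conj (phase a N) = phase (-a) N := by
  rw [phase, phase, ← Complex.exp_conj, map_mul, Complex.conj_ofReal, Complex.conj_I, neg_div,
    Complex.ofReal_neg, mul_neg, neg_mul]

theorem tendsto_phase : Tendsto (phase a) atTop (𝓝 1) := by
  have hlim : Tendsto (fun N : ℕ => a / √(N : ℝ)) atTop (𝓝 0) :=
    tendsto_sqrt_natCast.const_div_atTop a
  have hcont : Continuous fun x : ℝ => Complex.exp (x * Complex.I) := by fun_prop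
  have hcomp := (hcont.tendsto 0).comp hlim
  rwa [Complex.ofReal_zero, zero_mul, Complex.exp_zero] at hcomp

theorem tendsto_sqrt_mul_one_sub_phase :
    Tendsto (fun N : ℕ => (√N : ℂ) * (1 - phase a N)) atTop (𝓝 (-(a * Complex.I))) := by
  have hderiv :
      HasDerivAt (fun x : ℝ => 1 - Complex.exp (a * Complex.I * x)) (-(a * Complex.I)) 0 := by
    have := (((hasDerivAt_id ((0 : ℝ) : ℂ)).const_mul (a * Complex.I)).cexp.const_sub 1).comp_ofReal
    simpa using this
  refine (hderiv.tendsto_slope_zero.comp tendsto_inv_sqrt_natCast_punctured).congr fun N => ?_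
  simp [phase, div_eq_mul_inv, mul_right_comm]

theorem tendsto_mul_one_sub_cos :
    Tendsto (fun N : ℕ => (N : ℝ) * (1 - Real.cos (a / √N))) atTop (𝓝 (a ^ 2 / 2)) := by
  have hderiv : HasDerivAt (fun x : ℝ => Real.sin (a / 2 * x)) (a / 2) 0 := by
    simpa using ((hasDerivAt_id (0 : ℝ)).const_mul (a / 2)).sin
  have hlim :=
    ((hderiv.tendsto_slope_zero.comp tendsto_inv_sqrt_natCast_punctured).pow 2).const_mul 2
  rw [show 2 * (a / 2) ^ 2 = a ^ 2 / 2 by ring] at hlim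
  refine hlim.congr fun N => ?_
  have hhalf : Real.cos (a / √N) = 1 - 2 * Real.sin (a / 2 * (√N)⁻¹) ^ 2 := by
    rw [show a / √N = 2 * (a / 2 * (√N)⁻¹) by ring, Real.cos_two_mul, Real.cos_sq']
    ring
  simp [hhalf, mul_pow]
  ring

theorem damping_pos (l : ℝ) (N : ℕ) : 0 < damping l N := Real.exp_pos _

theorem damping_lt_one (hl : 0 < l) {N : ℕ} (hN : 0 < N) : damping l N < 1 := by
  rw [damping, Real.exp_lt_one_iff]
  exact div_neg_of_neg_of_pos (by linarith) (by exact_mod_cast hN)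

theorem tendsto_damping (l : ℝ) : Tendsto (damping l) atTop (𝓝 1) := by
  have hcomp := (Real.continuous_exp.tendsto 0).comp (tendsto_const_div_atTop_nhds_zero_nat (-l))
  rwa [Real.exp_zero] at hcomp

theorem tendsto_mul_one_sub_damping (l : ℝ) :
    Tendsto (fun N : ℕ => (N : ℝ) * (1 - damping l N)) atTop (𝓝 l) := by
  have hderiv : HasDerivAt (fun x : ℝ => 1 - Real.exp (-l * x)) l 0 := by
    simpa using ((hasDerivAt_id (0 : ℝ)).const_mul (-l)).exp.const_sub 1
  refine (hderiv.tendsto_slope_zero.comp tendsto_inv_natCast_punctured).congr fun N => ?_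
  simp [damping, div_eq_mul_inv]

theorem tendsto_sqrt_one_sub_damping (l : ℝ) :
    Tendsto (fun N => √(1 - damping l N)) atTop (𝓝 0) := by
  simpa using ((tendsto_damping l).const_sub 1).sqrt

theorem tendsto_sqrt_one_add_damping (l : ℝ) :
    Tendsto (fun N => √(1 + damping l N)) atTop (𝓝 √2) := by
  simpa [one_add_one_eq_two] using ((tendsto_damping l).const_add 1).sqrt

theorem tendsto_kernelConst_damping (l : ℝ) :
    Tendsto (fun N => kernelConst (damping l N)) atTop (𝓝 (kernelConst 1)) := by
  have hcont : Continuous kernelConst := by unfold kernelConst; fun_prop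
  exact (hcont.tendsto 1).comp (tendsto_damping l)

theorem tendsto_mul_one_sub_symbol (l : ℝ) :
    Tendsto (fun N : ℕ => (N : ℝ) * (1 - damping l N * (((phase a N).re + (phase b N).re) / 2)))
      atTop (𝓝 (l + (a ^ 2 + b ^ 2) / 4)) := by
  have hcos := ((tendsto_mul_one_sub_cos a).add (tendsto_mul_one_sub_cos b)).div_const 2
  have hlim := (tendsto_mul_one_sub_damping l).add ((tendsto_damping l).mul hcos)
  rw [show l + 1 * ((a ^ 2 / 2 + b ^ 2 / 2) / 2) = l + (a ^ 2 + b ^ 2) / 4 by ring] at hlim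
  refine hlim.congr fun N => ?_
  rw [phase_re, phase_re]
  ring

theorem ofReal_sqrt_eq_cpow {r : ℝ} (hr : 0 ≤ r) : (√r : ℂ) = (r : ℂ) ^ (1 / 2 : ℂ) := by
  rw [Real.sqrt_eq_rpow, Complex.ofReal_cpow hr]
  norm_num

theorem ofReal_mul_cpow_half {r : ℝ} (hr : 0 ≤ r) (w : ℂ) :
    ((r : ℂ) * w) ^ (1 / 2 : ℂ) = √r * w ^ (1 / 2 : ℂ) := by
  rcases hr.eq_or_lt with rfl | hr
  · simp
  rcases eq_or_ne w 0 with rfl | hw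
  · simp
  have hr' : (r : ℂ) ≠ 0 := by exact_mod_cast hr.ne'
  rw [ofReal_sqrt_eq_cpow hr.le, Complex.cpow_def_of_ne_zero (mul_ne_zero hr' hw),
    Complex.log_ofReal_mul hr hw, Complex.ofReal_log hr.le, add_mul, Complex.exp_add,
    Complex.cpow_def_of_ne_zero hr', Complex.cpow_def_of_ne_zero hw]

-- Since `1 - cayley d * z = (1 - z) + 2d/(1+d) * z`, the two square-root scalings add up.
theorem tendsto_sqrt_mul_one_sub_cayley (l : ℝ) :
    Tendsto (fun N : ℕ => (√N : ℂ) * (1 - cayley √(1 - damping l N) * phase a N)) atTop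
      (𝓝 (2 * √l - a * Complex.I)) := by
  set d : ℕ → ℝ := fun N => √(1 - damping l N)
  have hd : Tendsto d atTop (𝓝 0) := tendsto_sqrt_one_sub_damping l
  have hscaled : Tendsto (fun N : ℕ => √N * d N) atTop (𝓝 √l) := by
    refine (tendsto_mul_one_sub_damping l).sqrt.congr fun N => ?_
    rw [Real.sqrt_mul N.cast_nonneg]
  have hcoef : Tendsto (fun N : ℕ => 2 * (√N * d N) / (1 + d N)) atTop (𝓝 (2 * √l)) := by
    simpa [Pi.div_def] using (hscaled.const_mul 2).div (hd.const_add 1) (by norm_num)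
  have hlim := ((Complex.continuous_ofReal.tendsto _).comp hcoef).mul (tendsto_phase a) |>.add
    (tendsto_sqrt_mul_one_sub_phase a)
  rw [mul_one, ← sub_eq_add_neg] at hlim
  push_cast at hlim
  refine hlim.congr fun N => ?_
  have hne : (1 + d N : ℂ) ≠ 0 := by exact_mod_cast (by positivity : 0 < 1 + d N).ne'
  simp only [Function.comp_apply]
  rw [cayley, ← show d N = √(1 - damping l N) from rfl]
  push_cast
  field_simp
  ring

theorem tendsto_sqrtFactor_neg_cayley (l : ℝ) :
    Tendsto (fun N => sqrtFactor (-cayley √(1 + damping l N)) (phase a N)) atTop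
      (𝓝 √(1 + cayley √2)) := by
  have hcayley : Tendsto (fun N => cayley √(1 + damping l N)) atTop (𝓝 (cayley √2)) :=
    ((tendsto_sqrt_one_add_damping l).const_sub 1).div
      ((tendsto_sqrt_one_add_damping l).const_add 1) (by positivity)
  have hpos : 0 < 1 + cayley √2 := by
    linarith [(abs_lt.mp (abs_cayley_lt_one (s := √2) (by positivity))).1]
  have hlim := (((Complex.continuous_ofReal.tendsto _).comp hcayley.neg).mul
    (tendsto_phase a)).const_sub 1
  rw [mul_one, Complex.ofReal_neg, sub_neg_eq_add, ← Complex.ofReal_one,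
    ← Complex.ofReal_add] at hlim
  rw [ofReal_sqrt_eq_cpow hpos.le]
  exact hlim.cpow tendsto_const_nhds (.inl (by simpa using hpos))

theorem tendsto_boundaryGF (hl : 0 < l) :
    Tendsto (fun N : ℕ => (√√N : ℂ) * boundaryGF (damping l N) (phase a N)) atTop
      (𝓝 (scalingConst * (2 * √l - a * Complex.I) ^ (1 / 2 : ℂ))) := by
  have hfac := (tendsto_sqrt_mul_one_sub_cayley a l).cpow (tendsto_const_nhds (x := (1 / 2 : ℂ)))
    (.inl (by simpa using hl))
  have hlim := (((Complex.continuous_ofReal.tendsto _).comp (tendsto_kernelConst_damping l)).mul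
    (tendsto_sqrtFactor_neg_cayley a l)).mul hfac
  rw [← Complex.ofReal_mul, ← scalingConst] at hlim
  refine hlim.congr' ?_
  filter_upwards [eventually_gt_atTop 0] with N hN
  rw [boundaryGF_eq (damping_pos l N) (damping_lt_one hl hN) (norm_phase a N),
    ofReal_mul_cpow_half (Real.sqrt_nonneg _), kernelFactor, sqrtFactor.eq_def (cayley _)]
  simp only [Function.comp_apply]
  ring

/-- The limit of the rescaled Laplace transform of `n ↦ aliveMean n (character z w)`. -/
noncomputable def laplaceLimit (a b l : ℝ) : ℂ :=
  scalingConst * (2 * √l + a * Complex.I) ^ (1 / 2 : ℂ) / (l + (a ^ 2 + b ^ 2) / 4 : ℝ)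

theorem tendsto_aliveGF_character (hl : 0 < l) :
    Tendsto (fun N : ℕ => (√√N / N : ℂ) * aliveGF (damping l N) (character (phase a N) (phase b N)))
      atTop (𝓝 (laplaceLimit a b l)) := by
  have hden := (Complex.continuous_ofReal.tendsto _).comp (tendsto_mul_one_sub_symbol a b l)
  have hpos : 0 < l + (a ^ 2 + b ^ 2) / 4 := by positivity
  have hlim := (tendsto_boundaryGF (-a) hl).div hden (by exact_mod_cast hpos.ne')
  rw [Complex.ofReal_neg, neg_mul, sub_neg_eq_add, ← laplaceLimit] at hlim
  refine hlim.congr' ?_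
  filter_upwards [eventually_gt_atTop 0] with N hN
  have ht : ‖(damping l N : ℂ)‖ < 1 := by
    rw [Complex.norm_real, Real.norm_of_nonneg (damping_pos l N).le]
    exact damping_lt_one hl hN
  set r : ℝ := ((phase a N).re + (phase b N).re) / 2 with hr
  have hr_le : r ≤ 1 := by
    rw [hr, phase_re, phase_re]
    linarith [Real.cos_le_one (a / √N), Real.cos_le_one (b / √N)]
  have hsymbol : (1 - damping l N * r : ℂ) ≠ 0 := by
    norm_cast
    nlinarith [damping_pos l N, damping_lt_one hl hN]
  have hN' : (N : ℂ) ≠ 0 := by exact_mod_cast hN.ne'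
  have hkernel := kernel_mul_aliveGF_character ht (norm_phase a N) (norm_phase b N)
  rw [conj_phase, ← hr] at hkernel
  rw [Pi.div_apply, ← hkernel, Function.comp_apply, ← hr]
  push_cast
  field_simp

end Scaling

/-! ### Method of moments -/

section Moments

variable {Ω Ω' E : Type*} [MeasurableSpace Ω] [MeasurableSpace Ω'] [NormedAddCommGroup E]
  [NormedSpace ℝ E] {μ : Measure Ω} {ν : Measure Ω'}

theorem integrable_comp_smul {φ : Ω → ℝ} {g : Ω → E} {F : ℝ → ℝ} (hφ : Measurable φ)
    (hφI : ∀ᵐ x ∂μ, φ x ∈ Icc 0 1) (hg : Integrable g μ) (hF : Continuous F) :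
    Integrable (fun x => F (φ x) • g x) μ := by
  obtain ⟨C, hC⟩ := isCompact_Icc.exists_bound_of_continuousOn (hF.continuousOn (s := Icc 0 1))
  exact hg.bdd_smul C (hF.measurable.comp hφ).aestronglyMeasurable (hφI.mono fun _ => hC _)

theorem norm_integral_comp_smul_sub_le {φ : Ω → ℝ} {g : Ω → E} {F G : ℝ → ℝ} {ε : ℝ}
    (hφ : Measurable φ) (hφI : ∀ᵐ x ∂μ, φ x ∈ Icc 0 1) (hg : Integrable g μ) (hF : Continuous F)
    (hG : Continuous G) (hFG : ∀ u ∈ Icc (0 : ℝ) 1, |F u - G u| ≤ ε) :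
    ‖∫ x, F (φ x) • g x ∂μ - ∫ x, G (φ x) • g x ∂μ‖ ≤ ε * ∫ x, ‖g x‖ ∂μ := by
  rw [← integral_sub (integrable_comp_smul hφ hφI hg hF) (integrable_comp_smul hφ hφI hg hG),
    ← integral_const_mul]
  refine norm_integral_le_of_norm_le (hg.norm.const_mul ε) (hφI.mono fun x hx => ?_)
  rw [← sub_smul, norm_smul]
  exact mul_le_mul_of_nonneg_right (hFG _ hx) (norm_nonneg _)

variable {φ : ℕ → Ω → ℝ} {g : ℕ → Ω → E} {ψ : Ω' → ℝ} {h : Ω' → E}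

theorem tendsto_integral_eval_smul (hφ : ∀ N, Measurable (φ N))
    (hφI : ∀ N, ∀ᵐ x ∂μ, φ N x ∈ Icc 0 1)
    (hg : ∀ᶠ N in atTop, Integrable (g N) μ) (hψ : Measurable ψ) (hψI : ∀ᵐ x ∂ν, ψ x ∈ Icc 0 1)
    (hh : Integrable h ν)
    (hmom : ∀ k : ℕ, Tendsto (fun N => ∫ x, φ N x ^ k • g N x ∂μ) atTop
      (𝓝 (∫ x, ψ x ^ k • h x ∂ν))) (P : Polynomial ℝ) :
    Tendsto (fun N => ∫ x, P.eval (φ N x) • g N x ∂μ) atTop (𝓝 (∫ x, P.eval (ψ x) • h x ∂ν)) := by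
  induction P using Polynomial.induction_on' with
  | add P Q hP hQ =>
    simp only [Polynomial.eval_add, add_smul]
    rw [integral_add (integrable_comp_smul hψ hψI hh P.continuous)
      (integrable_comp_smul hψ hψI hh Q.continuous)]
    refine (hP.add hQ).congr' ?_
    filter_upwards [hg] with N hN
    rw [integral_add (integrable_comp_smul (hφ N) (hφI N) hN P.continuous)
      (integrable_comp_smul (hφ N) (hφI N) hN Q.continuous)]
  | monomial k c =>
    simp only [Polynomial.eval_monomial, mul_smul, integral_smul]
    exact (hmom k).const_smul c

theorem tendsto_integral_comp_smul {M : ℝ} (hφ : ∀ N, Measurable (φ N))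
    (hφI : ∀ N, ∀ᵐ x ∂μ, φ N x ∈ Icc 0 1) (hg : ∀ᶠ N in atTop, Integrable (g N) μ)
    (hgM : ∀ᶠ N in atTop, ∫ x, ‖g N x‖ ∂μ ≤ M) (hψ : Measurable ψ) (hψI : ∀ᵐ x ∂ν, ψ x ∈ Icc 0 1)
    (hh : Integrable h ν)
    (hmom : ∀ k : ℕ, Tendsto (fun N => ∫ x, φ N x ^ k • g N x ∂μ) atTop
      (𝓝 (∫ x, ψ x ^ k • h x ∂ν))) {F : ℝ → ℝ} (hF : Continuous F) :
    Tendsto (fun N => ∫ x, F (φ N x) • g N x ∂μ) atTop (𝓝 (∫ x, F (ψ x) • h x ∂ν)) := by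
  set K := |M| + ∫ x, ‖h x‖ ∂ν + 1
  have hK : 0 < K := by positivity
  refine Metric.tendsto_nhds.mpr fun ε hε => ?_
  obtain ⟨P, hP⟩ := exists_polynomial_near_of_continuousOn 0 1 F hF.continuousOn (ε / 2 / K)
    (by positivity)
  have hFP (u : ℝ) (hu : u ∈ Icc (0 : ℝ) 1) : |F u - P.eval u| ≤ ε / 2 / K := by
    rw [abs_sub_comm]
    exact (hP u hu).le
  have hlim := Metric.tendsto_nhds.mp (tendsto_integral_eval_smul hφ hφI hg hψ hψI hh hmom P)
    (ε / 2 / K) (by positivity)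
  filter_upwards [hg, hgM, hlim] with N hN hNM hNP
  have hN_approx := norm_integral_comp_smul_sub_le (hφ N) (hφI N) hN hF P.continuous hFP
  have h_approx := norm_integral_comp_smul_sub_le hψ hψI hh hF P.continuous hFP
  rw [← dist_eq_norm] at hN_approx h_approx
  rw [dist_comm] at h_approx
  calc dist (∫ x, F (φ N x) • g N x ∂μ) (∫ x, F (ψ x) • h x ∂ν)
    _ ≤ _ + _ + _ := dist_triangle4 _ _ _ _
    _ ≤ ε / 2 / K * M + ε / 2 / K + ε / 2 / K * ∫ x, ‖h x‖ ∂ν :=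
      add_le_add_three (hN_approx.trans (by gcongr)) hNP.le h_approx
    _ = ε / 2 / K * (M + ∫ x, ‖h x‖ ∂ν + 1) := by ring
    _ ≤ ε / 2 / K * K := by
      gcongr
      simp only [K, le_abs_self, add_le_add_iff_right]
    _ < ε := by
      rw [div_mul_cancel₀ _ hK.ne']
      linarith

end Moments

/-! ### Tauberian theorems -/

section Tauberian

variable {E : Type*} [NormedAddCommGroup E] [NormedSpace ℝ E]

/-- The rescaled Laplace transforms `N⁻¹ ∑ₙ e^{-kn/N} a N n` converge to the Laplace transform of
`h` at every integer `k ≥ 1`; informally, `a N n ≈ h (n / N)` on average. -/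
structure HasLaplaceScaling (a : ℕ → ℕ → E) (h : ℝ → E) : Prop where
  integrableOn : IntegrableOn (fun s => Real.exp (-s) • h s) (Ioi 0)
  summable : ∀ᶠ N in atTop, Summable fun n => damping 1 N ^ n * ‖a N n‖
  exists_bound : ∃ M : ℝ, ∀ᶠ N : ℕ in atTop, (N : ℝ)⁻¹ * ∑' n, damping 1 N ^ n * ‖a N n‖ ≤ M
  tendsto : ∀ k : ℕ, Tendsto (fun N : ℕ => (N : ℝ)⁻¹ • ∑' n, damping (k + 1) N ^ n • a N n) atTop
    (𝓝 (∫ s in Ioi 0, Real.exp (-((k + 1) * s)) • h s))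

theorem damping_le_one {l : ℝ} (hl : 0 ≤ l) (N : ℕ) : damping l N ≤ 1 :=
  Real.exp_le_one_iff.mpr <| div_nonpos_of_nonpos_of_nonneg (by linarith) N.cast_nonneg

theorem damping_natCast (k N : ℕ) : damping k N = damping 1 N ^ k := by
  rw [damping, damping, ← Real.exp_nat_mul]
  ring_nf

theorem damping_pow_mem_Icc (N n : ℕ) : damping 1 N ^ n ∈ Icc (0 : ℝ) 1 :=
  ⟨pow_nonneg (damping_pos 1 N).le n,
    pow_le_one₀ (damping_pos 1 N).le (damping_le_one zero_le_one N)⟩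

theorem integral_count_eq_tsum [CompleteSpace E] {f : ℕ → E} (hf : Integrable f Measure.count) :
    ∫ n, f n ∂Measure.count = ∑' n, f n := by
  simp only [integral_countable hf, count_real_singleton, one_smul]

theorem exp_pow_smul_exp_smul (k : ℕ) (s : ℝ) (x : E) :
    Real.exp (-s) ^ k • Real.exp (-s) • x = Real.exp (-((k + 1) * s)) • x := by
  rw [smul_smul, ← pow_succ, ← Real.exp_nat_mul, mul_neg, Nat.cast_succ]

theorem HasLaplaceScaling.tendsto_comp [CompleteSpace E] {a : ℕ → ℕ → E} {h : ℝ → E}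
    (ha : HasLaplaceScaling a h) {F : ℝ → ℝ} (hF : Continuous F) :
    Tendsto (fun N : ℕ => (N : ℝ)⁻¹ • ∑' n, (damping 1 N ^ n * F (damping 1 N ^ n)) • a N n) atTop
      (𝓝 (∫ s in Ioi 0, (Real.exp (-s) * F (Real.exp (-s))) • h s)) := by
  have mem_Icc (N : ℕ) : ∀ᵐ n ∂Measure.count, damping 1 N ^ n ∈ Icc (0 : ℝ) 1 :=
    ae_of_all _ (damping_pow_mem_Icc N)
  set g : ℕ → ℕ → E := fun N n => ((N : ℝ)⁻¹ * damping 1 N ^ n) • a N n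
  have norm_g (N n : ℕ) : ‖g N n‖ = (N : ℝ)⁻¹ * (damping 1 N ^ n * ‖a N n‖) := by
    rw [norm_smul, Real.norm_of_nonneg (mul_nonneg (by positivity) (damping_pow_mem_Icc N n).1),
      mul_assoc]
  have integrable_g : ∀ᶠ N in atTop, Integrable (g N) Measure.count := by
    filter_upwards [ha.summable] with N hN
    simpa only [integrable_count_iff, norm_g] using hN.mul_left _
  have integral_g {G : ℝ → ℝ} (hG : Continuous G) : ∀ᶠ N : ℕ in atTop,
      ∫ n, G (damping 1 N ^ n) • g N n ∂Measure.count =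
        (N : ℝ)⁻¹ • ∑' n, (damping 1 N ^ n * G (damping 1 N ^ n)) • a N n := by
    filter_upwards [integrable_g] with N hN
    rw [integral_count_eq_tsum (integrable_comp_smul .of_discrete (mem_Icc N) hN hG),
      ← tsum_const_smul'']
    simp only [g, smul_smul, mul_comm, mul_left_comm]
  obtain ⟨M, hM⟩ := ha.exists_bound
  have hM' : ∀ᶠ N in atTop, ∫ n, ‖g N n‖ ∂Measure.count ≤ M := by
    filter_upwards [hM, integrable_g] with N hNM hN
    simpa only [← tsum_mul_left, ← norm_g, ← integral_count_eq_tsum hN.norm] using hNM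
  have hmoments (k : ℕ) : Tendsto (fun N => ∫ n, (damping 1 N ^ n) ^ k • g N n ∂Measure.count)
      atTop (𝓝 (∫ s in Ioi 0, Real.exp (-s) ^ k • Real.exp (-s) • h s)) := by
    simp only [exp_pow_smul_exp_smul]
    refine (ha.tendsto k).congr' ((integral_g (continuous_pow k)).mono fun N hN => ?_)
    simp only [← Nat.cast_succ, damping_natCast]
    refine Eq.trans ?_ hN.symm
    congr! 3 with n
    rw [← pow_succ', ← pow_mul, ← pow_mul, mul_comm]
  have hlim := tendsto_integral_comp_smul (fun N => .of_discrete) mem_Icc integrable_g hM'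
    (ψ := fun s => Real.exp (-s)) (by fun_prop)
    (ae_restrict_of_forall_mem measurableSet_Ioi fun s (hs : 0 < s) =>
      ⟨(Real.exp_pos _).le, Real.exp_le_one_iff.mpr (by linarith)⟩) ha.integrableOn hmoments hF
  simp only [smul_smul, mul_comm (F _)] at hlim
  exact hlim.congr' (integral_g hF)

/-- A bump supported on `[e^{-B}, e^{-A}]`. -/
noncomputable def bump (A B u : ℝ) : ℝ := max 0 ((u - Real.exp (-B)) * (Real.exp (-A) - u))

/-- Weights on `ℕ` which vanish unless `A * N < n < B * N`. -/
noncomputable def windowWeight (A B : ℝ) (N n : ℕ) : ℝ :=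
  damping 1 N ^ n * bump A B (damping 1 N ^ n)

/-- The average of `a N n` over the window `A * N < n < B * N`, with weights `windowWeight`. -/
noncomputable def windowAverage (A B : ℝ) (a : ℕ → ℕ → E) (N : ℕ) : E :=
  (Finset.Ioo ⌊A * N⌋₊ ⌈B * N⌉₊).centerMass (windowWeight A B N) (a N)

theorem continuous_bump (A B : ℝ) : Continuous (bump A B) := by
  unfold bump
  fun_prop

theorem bump_nonneg (A B u : ℝ) : 0 ≤ bump A B u := le_max_left _ _

variable {A B : ℝ}

theorem bump_exp_pos_iff (hAB : A < B) {s : ℝ} : 0 < bump A B (Real.exp (-s)) ↔ s ∈ Ioo A B := by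
  have hexp : Real.exp (-B) < Real.exp (-A) := Real.exp_lt_exp.mpr (neg_lt_neg hAB)
  have hprod : 0 < (Real.exp (-s) - Real.exp (-B)) * (Real.exp (-A) - Real.exp (-s)) ↔
      Real.exp (-B) < Real.exp (-s) ∧ Real.exp (-s) < Real.exp (-A) := by
    refine ⟨fun h => ?_, fun h => mul_pos (sub_pos.mpr h.1) (sub_pos.mpr h.2)⟩
    constructor <;> nlinarith
  rw [bump, lt_max_iff, hprod, Real.exp_lt_exp, Real.exp_lt_exp, neg_lt_neg_iff, neg_lt_neg_iff,
    mem_Ioo, and_comm]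
  simp

theorem windowWeight_nonneg (A B : ℝ) (N n : ℕ) : 0 ≤ windowWeight A B N n :=
  mul_nonneg (damping_pow_mem_Icc N n).1 (bump_nonneg _ _ _)

theorem mem_Ioo_floor_ceil {A B : ℝ} (hA : 0 ≤ A) {N n : ℕ} :
    n ∈ Finset.Ioo ⌊A * N⌋₊ ⌈B * N⌉₊ ↔ A * N < n ∧ n < B * N := by
  rw [Finset.mem_Ioo, Nat.floor_lt (by positivity), Nat.lt_ceil]

theorem windowWeight_eq_zero (hA : 0 ≤ A) (hAB : A < B) {N n : ℕ} (hN : 0 < N)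
    (hn : n ∉ Finset.Ioo ⌊A * N⌋₊ ⌈B * N⌉₊) : windowWeight A B N n = 0 := by
  have hdamping : damping 1 N ^ n = Real.exp (-(n / N)) := by
    rw [damping, ← Real.exp_nat_mul]
    ring_nf
  have hN' : (0 : ℝ) < N := by exact_mod_cast hN
  rw [mem_Ioo_floor_ceil hA, ← lt_div_iff₀ hN', ← div_lt_iff₀ hN', ← mem_Ioo,
    ← bump_exp_pos_iff hAB, not_lt] at hn
  rw [windowWeight, hdamping, hn.antisymm (bump_nonneg _ _ _), mul_zero]

theorem tendsto_inv_mul_tsum_damping_pow {k : ℝ} (hk : 0 < k) :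
    Tendsto (fun N : ℕ => (N : ℝ)⁻¹ * ∑' n, damping k N ^ n) atTop (𝓝 k⁻¹) := by
  refine ((tendsto_mul_one_sub_damping k).inv₀ hk.ne').congr' ?_
  filter_upwards [eventually_gt_atTop 0] with N hN
  rw [tsum_geometric_of_lt_one (damping_pos k N).le (damping_lt_one hk hN), mul_inv]

theorem hasLaplaceScaling_one : HasLaplaceScaling (fun _ _ => (1 : ℝ)) fun _ => 1 where
  integrableOn := by simpa using integrableOn_exp_neg_Ioi 0
  summable := by
    filter_upwards [eventually_gt_atTop 0] with N hN
    simpa using summable_geometric_of_lt_one (damping_pos 1 N).le (damping_lt_one one_pos hN)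
  exists_bound := ⟨2, by
    simpa using (tendsto_inv_mul_tsum_damping_pow one_pos).eventually_le_const
      (by norm_num : (1 : ℝ)⁻¹ < 2)⟩
  tendsto k := by
    have hk : (0 : ℝ) < k + 1 := by positivity
    have hint : ∫ s in Ioi 0, Real.exp (-((k + 1) * s)) = (k + 1 : ℝ)⁻¹ := by
      simpa [neg_div_neg_eq, -neg_add_rev] using integral_exp_mul_Ioi (neg_lt_zero.mpr hk) 0
    simpa [hint] using tendsto_inv_mul_tsum_damping_pow hk

theorem HasLaplaceScaling.tendsto_sum_windowWeight [CompleteSpace E] {a : ℕ → ℕ → E} {h : ℝ → E}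
    (ha : HasLaplaceScaling a h) (hA : 0 ≤ A) (hAB : A < B) :
    Tendsto (fun N : ℕ => (N : ℝ)⁻¹ •
        ∑ n ∈ Finset.Ioo ⌊A * N⌋₊ ⌈B * N⌉₊, windowWeight A B N n • a N n) atTop
      (𝓝 (∫ s in Ioi 0, (Real.exp (-s) * bump A B (Real.exp (-s))) • h s)) := by
  refine (ha.tendsto_comp (continuous_bump A B)).congr' ?_
  filter_upwards [eventually_gt_atTop 0] with N hN
  congr 1
  refine tsum_eq_sum fun n hn => ?_
  rw [← windowWeight, windowWeight_eq_zero hA hAB hN hn, zero_smul]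

theorem integrableOn_exp_mul_bump_smul {h : ℝ → E}
    (hh : IntegrableOn (fun s => Real.exp (-s) • h s) (Ioi 0)) (A B : ℝ) :
    IntegrableOn (fun s => (Real.exp (-s) * bump A B (Real.exp (-s))) • h s) (Ioi 0) := by
  refine (integrable_comp_smul (φ := fun s => Real.exp (-s)) (by fun_prop) ?_ hh
    (continuous_bump A B)).congr (ae_of_all _ fun s => ?_)
  · exact ae_restrict_of_forall_mem measurableSet_Ioi fun s (hs : 0 < s) =>
      ⟨(Real.exp_pos _).le, Real.exp_le_one_iff.mpr (by linarith)⟩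
  · simp only [smul_smul, mul_comm]

theorem integrableOn_exp_mul_bump (A B : ℝ) :
    IntegrableOn (fun s => Real.exp (-s) * bump A B (Real.exp (-s))) (Ioi 0) := by
  simpa using integrableOn_exp_mul_bump_smul hasLaplaceScaling_one.integrableOn A B

theorem integral_exp_mul_bump_pos (hA : 0 ≤ A) (hAB : A < B) :
    0 < ∫ s in Ioi 0, Real.exp (-s) * bump A B (Real.exp (-s)) := by
  rw [setIntegral_pos_iff_support_of_nonneg_ae
    (ae_of_all _ fun s => mul_nonneg (Real.exp_pos _).le (bump_nonneg _ _ _))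
    (integrableOn_exp_mul_bump A B)]
  have hsubset : Ioo A B ⊆
      Function.support (fun s => Real.exp (-s) * bump A B (Real.exp (-s))) ∩ Ioi 0 := fun s hs =>
    ⟨(mul_pos (Real.exp_pos _) ((bump_exp_pos_iff hAB).mpr hs)).ne', hA.trans_lt hs.1⟩
  exact (by simpa using hAB : 0 < volume (Ioo A B)).trans_le (measure_mono hsubset)

theorem eventually_sum_windowWeight_pos (hA : 0 ≤ A) (hAB : A < B) :
    ∀ᶠ N : ℕ in atTop, 0 < ∑ n ∈ Finset.Ioo ⌊A * N⌋₊ ⌈B * N⌉₊, windowWeight A B N n := by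
  have hlim := hasLaplaceScaling_one.tendsto_sum_windowWeight hA hAB
  simp only [smul_eq_mul, mul_one] at hlim
  filter_upwards [hlim.eventually_const_lt (integral_exp_mul_bump_pos hA hAB)] with N hN
  exact pos_of_mul_pos_right hN (by positivity)

theorem eventually_windowAverage_mem (hA : 0 ≤ A) (hAB : A < B) {a : ℕ → ℕ → E} {K : ℕ → Set E}
    (hK : ∀ N, Convex ℝ (K N))
    (haK : ∀ᶠ N : ℕ in atTop, ∀ n : ℕ, A * N < n → n < B * N → a N n ∈ K N) :
    ∀ᶠ N in atTop, windowAverage A B a N ∈ K N := by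
  filter_upwards [eventually_sum_windowWeight_pos hA hAB, haK] with N hN haN
  refine (hK N).centerMass_mem (fun n _ => windowWeight_nonneg A B N n) hN fun n hn => ?_
  obtain ⟨hAn, hnB⟩ := (mem_Ioo_floor_ceil hA).mp hn
  exact haN n hAn hnB

theorem norm_inv_integral_smul_sub_le [CompleteSpace E] {Ω : Type*} [MeasurableSpace Ω]
    {μ : Measure Ω} {w : Ω → ℝ} {h : Ω → E} {c : E} {ε : ℝ} (hw : ∀ x, 0 ≤ w x)
    (hw_int : Integrable w μ) (hw_pos : 0 < ∫ x, w x ∂μ) (hwh : Integrable (fun x => w x • h x) μ)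
    (hε : ∀ x, 0 < w x → ‖h x - c‖ ≤ ε) :
    ‖(∫ x, w x ∂μ)⁻¹ • ∫ x, w x • h x ∂μ - c‖ ≤ ε := by
  have hsub : (∫ x, w x ∂μ)⁻¹ • ∫ x, w x • h x ∂μ - c =
      (∫ x, w x ∂μ)⁻¹ • ∫ x, w x • (h x - c) ∂μ := by
    simp only [smul_sub]
    rw [integral_sub hwh (hw_int.smul_const c), integral_smul_const, smul_sub,
      inv_smul_smul₀ hw_pos.ne']
  rw [hsub, norm_smul, norm_inv, Real.norm_of_nonneg hw_pos.le, inv_mul_le_iff₀ hw_pos,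
    ← integral_mul_const]
  refine norm_integral_le_of_norm_le (hw_int.mul_const ε) (ae_of_all _ fun x => ?_)
  rw [norm_smul, Real.norm_of_nonneg (hw x)]
  rcases (hw x).eq_or_lt with hx | hx
  · simp [← hx]
  · exact mul_le_mul_of_nonneg_left (hε x hx) hx.le

theorem HasLaplaceScaling.exists_tendsto_windowAverage [CompleteSpace E] {a : ℕ → ℕ → E}
    {h : ℝ → E} (ha : HasLaplaceScaling a h) (hA : 0 ≤ A) (hAB : A < B) {c : E} {ε : ℝ}
    (hε : ∀ s ∈ Ioo A B, ‖h s - c‖ ≤ ε) :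
    ∃ c', ‖c' - c‖ ≤ ε ∧ Tendsto (windowAverage A B a) atTop (𝓝 c') := by
  set w : ℝ → ℝ := fun s => Real.exp (-s) * bump A B (Real.exp (-s))
  have hw : 0 < ∫ s in Ioi 0, w s := integral_exp_mul_bump_pos hA hAB
  have hw_nonneg (s : ℝ) : 0 ≤ w s := mul_nonneg (Real.exp_pos _).le (bump_nonneg _ _ _)
  refine ⟨(∫ s in Ioi 0, w s)⁻¹ • ∫ s in Ioi 0, w s • h s, ?_, ?_⟩
  · refine norm_inv_integral_smul_sub_le hw_nonneg (integrableOn_exp_mul_bump A B) hw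
      (integrableOn_exp_mul_bump_smul ha.integrableOn A B) fun s hs => ?_
    exact hε s ((bump_exp_pos_iff hAB).mp (pos_of_mul_pos_right hs (Real.exp_pos _).le))
  · have hweights := hasLaplaceScaling_one.tendsto_sum_windowWeight hA hAB
    simp only [smul_eq_mul, mul_one] at hweights
    refine ((hweights.inv₀ hw.ne').smul (ha.tendsto_sum_windowWeight hA hAB)).congr' ?_
    filter_upwards [eventually_gt_atTop 0] with N hN
    have hN' : (N : ℝ) ≠ 0 := by exact_mod_cast hN.ne'
    rw [windowAverage, Finset.centerMass, smul_smul, mul_inv, inv_inv, mul_right_comm,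
      mul_inv_cancel₀ hN', one_mul]

theorem HasLaplaceScaling.eventually_windowAverage_mem_ball [CompleteSpace E] {a : ℕ → ℕ → E}
    {h : ℝ → E} (ha : HasLaplaceScaling a h) (hh : ContinuousAt h 1) {ε : ℝ} (hε : 0 < ε) :
    ∃ δ > 0, ∀ A B, 0 ≤ A → A < B → 1 - δ ≤ A → B ≤ 1 + δ →
      ∀ᶠ N in atTop, windowAverage A B a N ∈ Metric.ball (h 1) ε := by
  obtain ⟨δ, hδ, hδε⟩ := Metric.continuousAt_iff.mp hh (ε / 2) (by positivity)
  refine ⟨δ, hδ, fun A B hA hAB hAδ hBδ => ?_⟩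
  obtain ⟨c', hc', hlim⟩ := ha.exists_tendsto_windowAverage hA hAB (c := h 1) (ε := ε / 2)
    fun s hs => by
      rw [← dist_eq_norm]
      refine (hδε ?_).le
      rw [Real.dist_eq, abs_sub_lt_iff]
      constructor <;> linarith [hs.1, hs.2]
  refine hlim.eventually (Metric.isOpen_ball.mem_nhds ?_)
  rw [Metric.mem_ball, dist_eq_norm]
  linarith

theorem HasLaplaceScaling.tendsto_of_antitone {a : ℕ → ℕ → ℝ} {h : ℝ → ℝ}
    (ha : HasLaplaceScaling a h) (hanti : ∀ N, Antitone (a N)) (hh : ContinuousAt h 1) :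
    Tendsto (fun N => a N N) atTop (𝓝 (h 1)) := by
  refine Metric.tendsto_nhds.mpr fun ε hε => ?_
  obtain ⟨δ, hδ, hball⟩ := ha.eventually_windowAverage_mem_ball hh hε
  have hleft : ∀ᶠ N in atTop, windowAverage (max 0 (1 - δ)) 1 a N ∈ Ici (a N N) := by
    refine eventually_windowAverage_mem (le_max_left _ _) (by simpa) (fun N => convex_Ici _)
      (.of_forall fun N n _ hn => hanti N ?_)
    rw [one_mul] at hn
    exact_mod_cast hn.le
  have hright : ∀ᶠ N in atTop, windowAverage 1 (1 + δ) a N ∈ Iic (a N N) := by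
    refine eventually_windowAverage_mem zero_le_one (by simpa) (fun N => convex_Iic _)
      (.of_forall fun N n hn _ => hanti N ?_)
    rw [one_mul] at hn
    exact_mod_cast hn.le
  filter_upwards [hleft, hright,
    hball (max 0 (1 - δ)) 1 (le_max_left _ _) (by simpa) (le_max_right _ _) (by linarith),
    hball 1 (1 + δ) zero_le_one (by simpa) (by linarith) le_rfl] with N hleft hright hl hr
  rw [Metric.mem_ball, Real.dist_eq, abs_sub_lt_iff] at hl hr
  rw [Real.dist_eq, abs_sub_lt_iff]
  constructor <;> linarith [mem_Ici.mp hleft, mem_Iic.mp hright]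

theorem HasLaplaceScaling.tendsto_of_slowlyOscillating [CompleteSpace E] {a : ℕ → ℕ → E}
    {h : ℝ → E} (ha : HasLaplaceScaling a h) (hh : ContinuousAt h 1)
    (hosc : ∀ ε > 0, ∃ δ > (0 : ℝ), ∀ᶠ N : ℕ in atTop,
      ∀ n : ℕ, (1 - δ) * N < n → n < N → dist (a N n) (a N N) ≤ ε) :
    Tendsto (fun N => a N N) atTop (𝓝 (h 1)) := by
  refine Metric.tendsto_nhds.mpr fun ε hε => ?_
  obtain ⟨δ, hδ, hball⟩ := ha.eventually_windowAverage_mem_ball hh (half_pos hε)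
  obtain ⟨η, hη, hosc⟩ := hosc (ε / 2) (half_pos hε)
  set A := max 0 (1 - min δ η)
  have hA : A < 1 := by simp [A, hδ, hη]
  have havg : ∀ᶠ N in atTop, windowAverage A 1 a N ∈ Metric.closedBall (a N N) (ε / 2) := by
    refine eventually_windowAverage_mem (le_max_left _ _) hA (fun N => convex_closedBall _ _) ?_
    filter_upwards [hosc] with N hN n hAn hn
    rw [one_mul] at hn
    refine hN n (lt_of_le_of_lt ?_ hAn) (by exact_mod_cast hn)
    gcongr
    exact (sub_le_sub_left (min_le_right _ _) 1).trans (le_max_right _ _)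
  filter_upwards [havg, hball A 1 (le_max_left _ _) hA
    ((sub_le_sub_left (min_le_left _ _) 1).trans (le_max_right _ _)) (by linarith)] with N hN hl
  rw [Metric.mem_closedBall, dist_comm] at hN
  linarith [dist_triangle (a N N) (windowAverage A 1 a N) (h 1), Metric.mem_ball.mp hl]

end Tauberian

/-! ### Reduction to a Laplace inversion problem -/

section Scaling

variable {a b : ℝ}

theorem phase_zero (N : ℕ) : phase 0 N = 1 := by simp [phase]

theorem aliveMean_character_one (n : ℕ) : aliveMean n (character 1 1) = survival n := by
  simp [survival, aliveMean, character]

theorem norm_character_phase (a b : ℝ) (N : ℕ) (p : ℤ × ℤ) :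
    ‖character (phase a N) (phase b N) p‖ = 1 :=
  norm_character (norm_phase a N) (norm_phase b N) p

theorem inv_smul_tsum_damping_pow_smul (a b l : ℝ) (N : ℕ) :
    (N : ℝ)⁻¹ • ∑' n, damping l N ^ n •
        ((√√N : ℂ) * aliveMean n (character (phase a N) (phase b N))) =
      (√√N / N : ℂ) * aliveGF (damping l N) (character (phase a N) (phase b N)) := by
  simp only [Complex.real_smul, aliveGF, Complex.ofReal_pow, mul_left_comm _ (√√N : ℂ),
    tsum_mul_left]
  push_cast
  ring

theorem summable_damping_pow_mul_survival {l : ℝ} (hl : 0 < l) {N : ℕ} (hN : 0 < N) :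
    Summable fun n => damping l N ^ n * survival n :=
  .of_nonneg_of_le (fun n => mul_nonneg (pow_nonneg (damping_pos l N).le n) (survival_pos n).le)
    (fun n => mul_le_of_le_one_right (pow_nonneg (damping_pos l N).le n) (survival_le_one n))
    (summable_geometric_of_lt_one (damping_pos l N).le (damping_lt_one hl hN))

theorem tendsto_inv_mul_tsum_survival {l : ℝ} (hl : 0 < l) :
    Tendsto (fun N : ℕ => (N : ℝ)⁻¹ * ∑' n, damping l N ^ n * (√√N * survival n)) atTop
      (𝓝 (laplaceLimit 0 0 l).re) := by
  refine ((Complex.continuous_re.tendsto _).comp (tendsto_aliveGF_character 0 0 hl)).congr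
    fun N => ?_
  rw [Function.comp_apply, ← inv_smul_tsum_damping_pow_smul, phase_zero]
  simp only [aliveMean_character_one, Complex.real_smul]
  norm_cast

theorem hasLaplaceScaling_survival {h : ℝ → ℝ}
    (hint : IntegrableOn (fun s => Real.exp (-s) • h s) (Ioi 0))
    (hlap : ∀ l > 0, ∫ s in Ioi 0, Real.exp (-(l * s)) • h s = (laplaceLimit 0 0 l).re) :
    HasLaplaceScaling (fun N n => √√N * survival n) h where
  integrableOn := hint
  summable := by
    filter_upwards [eventually_gt_atTop 0] with N hN
    simpa [abs_of_nonneg (survival_pos _).le, abs_of_nonneg (Real.sqrt_nonneg √(N : ℝ)),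
      mul_left_comm _ √√(N : ℝ)] using
        (summable_damping_pow_mul_survival one_pos hN).mul_left √√N
  exists_bound := by
    refine ⟨(laplaceLimit 0 0 1).re + 1, ?_⟩
    filter_upwards [(tendsto_inv_mul_tsum_survival one_pos).eventually_le_const (lt_add_one _)]
      with N hN
    simpa [abs_of_nonneg (survival_pos _).le, abs_of_nonneg (Real.sqrt_nonneg √(N : ℝ))] using hN
  tendsto k := by
    rw [hlap _ (by positivity)]
    exact tendsto_inv_mul_tsum_survival (by positivity)

theorem hasLaplaceScaling_aliveMean {h₀ : ℝ → ℝ} {h : ℝ → ℂ}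
    (h₀_scaling : HasLaplaceScaling (fun N n => √√N * survival n) h₀)
    (hint : IntegrableOn (fun s => Real.exp (-s) • h s) (Ioi 0))
    (hlap : ∀ l > 0, ∫ s in Ioi 0, Real.exp (-(l * s)) • h s = laplaceLimit a b l) :
    HasLaplaceScaling
      (fun N n => (√√N : ℂ) * aliveMean n (character (phase a N) (phase b N))) h := by
  have hle (N n : ℕ) :
      damping 1 N ^ n * ‖(√√N : ℂ) * aliveMean n (character (phase a N) (phase b N))‖ ≤
        damping 1 N ^ n * ‖√√N * survival n‖ := by
    have hpow := pow_nonneg (damping_pos 1 N).le n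
    rw [norm_mul, norm_mul, Complex.norm_real, Real.norm_of_nonneg (survival_pos n).le]
    gcongr
    exact norm_aliveMean_le_survival (fun p => (norm_character_phase a b N p).le) n
  have hnonneg (N n : ℕ) :
      0 ≤ damping 1 N ^ n * ‖(√√N : ℂ) * aliveMean n (character (phase a N) (phase b N))‖ :=
    mul_nonneg (pow_nonneg (damping_pos 1 N).le n) (norm_nonneg _)
  have hsummable : ∀ᶠ N : ℕ in atTop, Summable fun n =>
      damping 1 N ^ n * ‖(√√N : ℂ) * aliveMean n (character (phase a N) (phase b N))‖ :=
    h₀_scaling.summable.mono fun N hN => .of_nonneg_of_le (hnonneg N) (hle N) hN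
  refine ⟨hint, hsummable, ?_, fun k => ?_⟩
  · obtain ⟨M, hM⟩ := h₀_scaling.exists_bound
    refine ⟨M, ?_⟩
    filter_upwards [hM, hsummable, h₀_scaling.summable] with N hNM hN hN₀
    exact (mul_le_mul_of_nonneg_left (hN.tsum_le_tsum (hle N) hN₀) (by positivity)).trans hNM
  · rw [hlap _ (by positivity)]
    simp only [inv_smul_tsum_damping_pow_smul]
    exact tendsto_aliveGF_character a b (by positivity)

end Scaling

section Oscillation

variable {f : ℤ × ℤ → ℂ} {r : ℝ}

theorem dist_aliveMean_succ_le (hf : ∀ p, ‖f p‖ ≤ 1) (hr : r ≤ 1)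
    (hstep : stepMean f = fun p => (r : ℂ) * f p) (n : ℕ) :
    dist (aliveMean n f) (aliveMean (n + 1) f) ≤
      survival n - survival (n + 1) + (1 - r) * survival n := by
  have hsucc : aliveMean (n + 1) f = r * aliveMean n f - exitMean n f := by
    rw [eq_sub_iff_add_eq, ← aliveMean_stepMean, hstep, aliveMean_const_mul]
  have hsub : aliveMean n f - aliveMean (n + 1) f =
      exitMean n f + (1 - r : ℝ) * aliveMean n f := by
    rw [hsucc]
    push_cast
    ring
  rw [dist_eq_norm, hsub]
  refine norm_add_le_of_le (norm_exitMean_le_survival_sub hf n) ?_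
  rw [norm_mul, Complex.norm_real, Real.norm_of_nonneg (sub_nonneg.mpr hr)]
  exact mul_le_mul_of_nonneg_left (norm_aliveMean_le_survival hf n) (sub_nonneg.mpr hr)

theorem dist_aliveMean_le (hf : ∀ p, ‖f p‖ ≤ 1) (hr : r ≤ 1)
    (hstep : stepMean f = fun p => (r : ℂ) * f p) {m n : ℕ} (hmn : m ≤ n) :
    dist (aliveMean m f) (aliveMean n f) ≤
      survival m - survival n + (1 - r) * (n - m) * survival m := by
  calc dist (aliveMean m f) (aliveMean n f)
    _ ≤ ∑ i ∈ Finset.Ico m n, (survival i - survival (i + 1) + (1 - r) * survival m) := by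
      refine dist_le_Ico_sum_of_dist_le hmn fun {i} hi _ =>
        (dist_aliveMean_succ_le hf hr hstep i).trans ?_
      gcongr
      exact survival_antitone hi
    _ = survival m - survival n + (1 - r) * (n - m) * survival m := by
      rw [Finset.sum_add_distrib, Finset.sum_const, Nat.card_Ico, nsmul_eq_mul, Nat.cast_sub hmn,
        ← neg_sub (survival n), ← Finset.sum_Ico_sub survival hmn, ← Finset.sum_neg_distrib]
      simp only [neg_sub]
      ring

theorem tendsto_sqrt_sqrt_mul_survival_floor {c x : ℝ} (hx : 0 < x)
    (hc : Tendsto (fun N : ℕ => √√N * survival N) atTop (𝓝 c)) :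
    Tendsto (fun N : ℕ => √√N * survival ⌊x * N⌋₊) atTop (𝓝 ((√√x)⁻¹ * c)) := by
  have hfloor : Tendsto (fun N : ℕ => ⌊x * N⌋₊) atTop atTop :=
    tendsto_nat_floor_atTop.comp (tendsto_natCast_atTop_atTop.const_mul_atTop hx)
  have hratio : Tendsto (fun N : ℕ => (⌊x * N⌋₊ : ℝ) / N) atTop (𝓝 x) :=
    (tendsto_nat_floor_mul_div_atTop hx.le).comp tendsto_natCast_atTop_atTop
  refine ((hratio.sqrt.sqrt.inv₀ (by positivity)).mul (hc.comp hfloor)).congr' ?_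
  filter_upwards [hfloor.eventually_gt_atTop 0] with N hN
  have hN' : (0 : ℝ) < ⌊x * N⌋₊ := by exact_mod_cast hN
  rw [Real.sqrt_div' _ N.cast_nonneg, Real.sqrt_div' _ (Real.sqrt_nonneg _), Function.comp_apply]
  field_simp [hN']

theorem natCast_mul_one_sub_symbol_le (a b : ℝ) {N : ℕ} (hN : 0 < N) :
    N * (1 - ((phase a N).re + (phase b N).re) / 2) ≤ (a ^ 2 + b ^ 2) / 4 := by
  have hN' : (0 : ℝ) < N := by exact_mod_cast hN
  have hcos (x : ℝ) : N * (1 - Real.cos (x / √N)) ≤ x ^ 2 / 2 := by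
    calc N * (1 - Real.cos (x / √N))
      _ ≤ N * ((x / √N) ^ 2 / 2) := by
        gcongr
        linarith [Real.one_sub_sq_div_two_le_cos (x := x / √N)]
      _ = x ^ 2 / 2 := by
        rw [div_pow, Real.sq_sqrt hN'.le]
        field_simp
  rw [phase_re, phase_re]
  linarith [hcos a, hcos b]

theorem slowlyOscillating_aliveMean {c : ℝ} (a b : ℝ)
    (hc : Tendsto (fun N : ℕ => √√N * survival N) atTop (𝓝 c)) {ε : ℝ} (hε : 0 < ε) :
    ∃ δ > (0 : ℝ), ∀ᶠ N : ℕ in atTop, ∀ n : ℕ, (1 - δ) * N < n → n < N →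
      dist ((√√N : ℂ) * aliveMean n (character (phase a N) (phase b N)))
        ((√√N : ℂ) * aliveMean N (character (phase a N) (phase b N))) ≤ ε := by
  set κ := (a ^ 2 + b ^ 2) / 4
  have hδ : ∀ᶠ δ : ℝ in 𝓝[>] 0, (1 + κ * δ) * ((√√(1 - δ))⁻¹ * c) - c < ε := by
    have hcont : ContinuousAt (fun δ : ℝ => (1 + κ * δ) * ((√√(1 - δ))⁻¹ * c) - c) 0 := by
      fun_prop (disch := simp)
    exact nhdsWithin_le_nhds (hcont.eventually_lt_const (by simpa using hε))
  obtain ⟨δ, hδε, hδ_pos, hδ_lt⟩ := (hδ.and (Ioo_mem_nhdsGT one_pos)).exists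
  refine ⟨δ, hδ_pos, ?_⟩
  have hlim := ((tendsto_sqrt_sqrt_mul_survival_floor (sub_pos.mpr hδ_lt) hc).const_mul
    (1 + κ * δ)).sub hc
  filter_upwards [hlim.eventually_lt_const hδε, eventually_gt_atTop 0] with N hNε hN n hδn hn
  set r := ((phase a N).re + (phase b N).re) / 2
  have hre (x : ℝ) : (phase x N).re ≤ 1 :=
    (Complex.re_le_norm _).trans (norm_phase x N).le
  have hr : r ≤ 1 := by unfold r; linarith [hre a, hre b]
  have hF : survival n ≤ survival ⌊(1 - δ) * N⌋₊ :=
    survival_antitone (Nat.floor_le_of_le hδn.le)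
  have hdrift : (1 - r) * (N - n) ≤ κ * δ := by
    calc (1 - r) * (N - n)
      _ ≤ (1 - r) * (δ * N) := by gcongr; linarith
      _ = N * (1 - r) * δ := by ring
      _ ≤ κ * δ := by gcongr; exact natCast_mul_one_sub_symbol_le a b hN
  rw [Complex.dist_eq, ← mul_sub, norm_mul, Complex.norm_real,
    Real.norm_of_nonneg (Real.sqrt_nonneg _), ← Complex.dist_eq]
  calc √√N * dist (aliveMean n (character (phase a N) (phase b N)))
        (aliveMean N (character (phase a N) (phase b N)))
    _ ≤ √√N * (survival n - survival N + (1 - r) * (N - n) * survival n) := by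
      gcongr
      exact dist_aliveMean_le (fun p => (norm_character_phase a b N p).le) hr
        (stepMean_character (norm_phase a N) (norm_phase b N)) hn.le
    _ ≤ √√N * (survival ⌊(1 - δ) * N⌋₊ - survival N + κ * δ * survival ⌊(1 - δ) * N⌋₊) := by
      gcongr
      exact (survival_pos n).le
    _ ≤ ε := by linarith

end Oscillation

/-! ### The Laplace transform of a first-passage density -/

section PassageTime

theorem integrableOn_and_integral_Ioi_of_hasDerivAt_of_nonneg {f f' : ℝ → ℝ} {a l₀ l₁ : ℝ}
    (hderiv : ∀ s ∈ Ioi a, HasDerivAt f (f' s) s) (hnonneg : ∀ s ∈ Ioi a, 0 ≤ f' s)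
    (hleft : Tendsto f (𝓝[>] a) (𝓝 l₀)) (hright : Tendsto f atTop (𝓝 l₁)) :
    IntegrableOn f' (Ioi a) ∧ ∫ s in Ioi a, f' s = l₁ - l₀ := by
  have hcont : ContinuousWithinAt (Function.update f a l₀) (Ici a) a := by
    rwa [continuousWithinAt_update_same, Ici_sdiff_left]
  have heq {s : ℝ} (hs : a < s) : Function.update f a l₀ s = f s :=
    Function.update_of_ne hs.ne' _ _
  have hderiv' (s : ℝ) (hs : s ∈ Ioi a) : HasDerivAt (Function.update f a l₀) (f' s) s :=
    (hderiv s hs).congr_of_eventuallyEq ((lt_mem_nhds hs).mono fun _ => heq)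
  have hright' : Tendsto (Function.update f a l₀) atTop (𝓝 l₁) :=
    hright.congr' ((eventually_gt_atTop a).mono fun _ hs => (heq hs).symm)
  refine ⟨integrableOn_Ioi_deriv_of_nonneg hcont hderiv' hnonneg hright', ?_⟩
  rw [integral_Ioi_of_hasDerivAt_of_nonneg hcont hderiv' hnonneg hright', Function.update_self]

/-- The primitive of `e^{-x²}` vanishing at the origin, i.e. the error function up to a constant. -/
noncomputable def gaussPrimitive (x : ℝ) : ℝ := ∫ t in (0 : ℝ)..x, Real.exp (-t ^ 2)

theorem hasDerivAt_gaussPrimitive (x : ℝ) :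
    HasDerivAt gaussPrimitive (Real.exp (-x ^ 2)) x := by
  have hcont : Continuous fun t : ℝ => Real.exp (-t ^ 2) := by fun_prop
  exact intervalIntegral.integral_hasDerivAt_right (hcont.intervalIntegrable _ _)
    (hcont.stronglyMeasurableAtFilter _ _) hcont.continuousAt

theorem tendsto_gaussPrimitive_atTop : Tendsto gaussPrimitive atTop (𝓝 (√Real.pi / 2)) := by
  have hint : Integrable fun t : ℝ => Real.exp (-t ^ 2) := by
    simpa using integrable_exp_neg_mul_sq one_pos
  have hgauss := integral_gaussian_Ioi 1
  simp only [neg_mul, one_mul, div_one] at hgauss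
  rw [← hgauss]
  exact intervalIntegral_tendsto_integral_Ioi 0 hint.integrableOn tendsto_id

theorem tendsto_gaussPrimitive_atBot : Tendsto gaussPrimitive atBot (𝓝 (-(√Real.pi / 2))) := by
  refine (tendsto_gaussPrimitive_atTop.comp tendsto_neg_atBot_atTop).neg.congr fun x => ?_
  have hodd := intervalIntegral.integral_comp_neg (a := 0) (b := x) fun t : ℝ => Real.exp (-t ^ 2)
  simp only [neg_sq, neg_zero] at hodd
  rw [Function.comp_apply, gaussPrimitive, gaussPrimitive, hodd, ← intervalIntegral.integral_symm]

variable {k r s : ℝ}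

theorem hasDerivAt_exp_mul_gaussPrimitive (k r : ℝ) (hs : 0 < s) :
    HasDerivAt (fun s => Real.exp (-(2 * k * r)) * gaussPrimitive (k * √s - r / √s))
      (Real.exp (-(k ^ 2 * s)) * Real.exp (-(r ^ 2 / s)) * ((k + r / s) / (2 * √s))) s := by
  have hsqrt : √s ≠ 0 := (Real.sqrt_pos.mpr hs).ne'
  have hinner : HasDerivAt (fun s => k * √s - r / √s) ((k + r / s) / (2 * √s)) s := by
    refine (((Real.hasDerivAt_sqrt hs.ne').const_mul k).sub
      (((Real.hasDerivAt_sqrt hs.ne').inv hsqrt).const_mul r)).congr_deriv ?_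
    rw [Real.sq_sqrt hs.le]
    field_simp
    ring
  refine (((hasDerivAt_gaussPrimitive _).comp s hinner).const_mul _).congr_deriv ?_
  rw [← mul_assoc, ← Real.exp_add, ← Real.exp_add]
  congr 2
  have hsq : (√s) ^ 2 = s := Real.sq_sqrt hs.le
  field_simp
  rw [hsq]
  ring

theorem tendsto_gaussPrimitive_nhdsGT_zero (k : ℝ) (hr : 0 < r) :
    Tendsto (fun s => gaussPrimitive (k * √s - r / √s)) (𝓝[>] 0) (𝓝 (-(√Real.pi / 2))) ∧
      Tendsto (fun s => gaussPrimitive (k * √s - -r / √s)) (𝓝[>] 0) (𝓝 (√Real.pi / 2)) := by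
  have hsqrt : Tendsto (fun s => √s) (𝓝[>] 0) (𝓝[>] 0) := by
    refine tendsto_nhdsWithin_iff.mpr ⟨?_, ?_⟩
    · simpa using (Real.continuous_sqrt.tendsto 0).mono_left nhdsWithin_le_nhds
    · filter_upwards [self_mem_nhdsWithin] with s hs using Real.sqrt_pos.mpr hs
  have hmul : Tendsto (fun s => k * √s) (𝓝[>] 0) (𝓝 0) := by
    simpa using (hsqrt.mono_right nhdsWithin_le_nhds).const_mul k
  have hdiv : Tendsto (fun s => r / √s) (𝓝[>] 0) atTop := by
    simpa only [div_eq_mul_inv, Function.comp_def] using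
      (tendsto_inv_nhdsGT_zero.comp hsqrt).const_mul_atTop hr
  constructor
  · simp only [sub_eq_add_neg]
    exact tendsto_gaussPrimitive_atBot.comp (hmul.add_atBot (tendsto_neg_atTop_atBot.comp hdiv))
  · simp only [neg_div, sub_neg_eq_add]
    exact tendsto_gaussPrimitive_atTop.comp (hmul.add_atTop hdiv)

theorem tendsto_gaussPrimitive_sqrt_atTop (hk : 0 < k) (r : ℝ) :
    Tendsto (fun s => gaussPrimitive (k * √s - r / √s)) atTop (𝓝 (√Real.pi / 2)) := by
  simp only [sub_eq_add_neg]
  exact tendsto_gaussPrimitive_atTop.comp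
    ((Real.tendsto_sqrt_atTop.const_mul_atTop hk).atTop_add
      (Real.tendsto_sqrt_atTop.const_div_atTop r).neg)

theorem integrableOn_and_integral_exp_mul_passageTime {l : ℝ} (hl : 0 < l) (hr : 0 < r) :
    IntegrableOn (fun s => Real.exp (-(l * s)) * ((s * √s)⁻¹ * Real.exp (-(r ^ 2 / s)))) (Ioi 0) ∧
      ∫ s in Ioi 0, Real.exp (-(l * s)) * ((s * √s)⁻¹ * Real.exp (-(r ^ 2 / s))) =
        √Real.pi / r * Real.exp (-(2 * √l * r)) := by
  set k := √l
  have hk : 0 < k := Real.sqrt_pos.mpr hl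
  have hkl : k ^ 2 = l := Real.sq_sqrt hl.le
  have hderiv (s : ℝ) (hs : s ∈ Ioi 0) :=
    ((hasDerivAt_exp_mul_gaussPrimitive k r hs).sub
      (hasDerivAt_exp_mul_gaussPrimitive k (-r) hs)).div_const r
  have hderiv_eq (s : ℝ) (hs : s ∈ Ioi 0) :
      (Real.exp (-(k ^ 2 * s)) * Real.exp (-(r ^ 2 / s)) * ((k + r / s) / (2 * √s)) -
        Real.exp (-(k ^ 2 * s)) * Real.exp (-((-r) ^ 2 / s)) * ((k + -r / s) / (2 * √s))) / r =
      Real.exp (-(l * s)) * ((s * √s)⁻¹ * Real.exp (-(r ^ 2 / s))) := by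
    have hs : 0 < s := hs
    rw [neg_sq, hkl]
    field_simp
    ring
  obtain ⟨hzero, hzero'⟩ := tendsto_gaussPrimitive_nhdsGT_zero k hr
  have hint := integrableOn_and_integral_Ioi_of_hasDerivAt_of_nonneg
    (fun s hs => (hderiv s hs).congr_deriv (hderiv_eq s hs))
    (fun s hs => by have hs : 0 < s := hs; positivity)
    (((hzero.const_mul _).sub (hzero'.const_mul _)).div_const r)
    ((((tendsto_gaussPrimitive_sqrt_atTop hk r).const_mul _).sub
      ((tendsto_gaussPrimitive_sqrt_atTop hk (-r)).const_mul _)).div_const r)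
  refine ⟨hint.1, hint.2.trans ?_⟩
  ring

end PassageTime

/-! ### Parabolic coordinates -/

section Parabolic

/-- The Euclidean norm on `ℝ × ℝ`, whose own norm is the sup norm. -/
noncomputable def radius (q : ℝ × ℝ) : ℝ := √(q.1 ^ 2 + q.2 ^ 2)

/-- Parabolic coordinates: the squaring map of the complex plane, in real coordinates. -/
def parabolic (p : ℝ × ℝ) : ℝ × ℝ := (p.1 ^ 2 - p.2 ^ 2, 2 * p.1 * p.2)

theorem radius_sq (q : ℝ × ℝ) : radius q ^ 2 = q.1 ^ 2 + q.2 ^ 2 := Real.sq_sqrt (by positivity)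

theorem radius_nonneg (q : ℝ × ℝ) : 0 ≤ radius q := Real.sqrt_nonneg _

theorem continuous_radius : Continuous radius := by
  unfold radius
  fun_prop

theorem abs_fst_le_radius (q : ℝ × ℝ) : |q.1| ≤ radius q :=
  Real.abs_le_sqrt (le_add_of_nonneg_right (sq_nonneg q.2))

theorem radius_parabolic (p : ℝ × ℝ) : radius (parabolic p) = p.1 ^ 2 + p.2 ^ 2 := by
  rw [radius, parabolic, ← Real.sqrt_sq (add_nonneg (sq_nonneg p.1) (sq_nonneg p.2))]
  ring_nf

theorem fst_parabolic_add_radius (p : ℝ × ℝ) :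
    (parabolic p).1 + radius (parabolic p) = 2 * p.1 ^ 2 := by
  rw [radius_parabolic, parabolic]
  ring

theorem injOn_parabolic : InjOn parabolic (Ioi 0 ×ˢ univ) := by
  rintro ⟨u, v⟩ ⟨hu, -⟩ ⟨u', v'⟩ ⟨hu', -⟩ h
  have hu : 0 < u := hu
  have hu' : 0 < u' := hu'
  have hsq : 2 * u ^ 2 = 2 * u' ^ 2 := by
    simpa only [fst_parabolic_add_radius] using congrArg (fun q => q.1 + radius q) h
  obtain rfl : u = u' := (pow_left_inj₀ hu.le hu'.le two_ne_zero).mp (by linarith)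
  exact Prod.ext rfl (mul_left_cancel₀ (mul_pos two_pos hu).ne' (congrArg Prod.snd h))

theorem fst_add_radius_pos {q : ℝ × ℝ} (hq : q ∈ polarCoord.source) : 0 < q.1 + radius q := by
  rcases hq with hx | hy
  · exact add_pos_of_pos_of_nonneg hx (radius_nonneg q)
  · have hlt : |q.1| < radius q :=
      Real.lt_sqrt_of_sq_lt (by rw [sq_abs]; linarith [sq_pos_of_ne_zero hy])
    linarith [neg_abs_le q.1]

theorem parabolic_image : parabolic '' (Ioi 0 ×ˢ univ) = polarCoord.source := by
  ext q
  constructor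
  · rintro ⟨⟨u, v⟩, ⟨hu, -⟩, rfl⟩
    have hu : 0 < u := hu
    by_cases hv : v = 0
    · left
      simp [parabolic, hv, hu]
    · right
      simp [parabolic, hv, hu.ne']
  · intro hq
    have hpos := fst_add_radius_pos hq
    set u := √((q.1 + radius q) / 2)
    have hu : 0 < u := Real.sqrt_pos.mpr (half_pos hpos)
    have hu_sq : u ^ 2 = (q.1 + radius q) / 2 := Real.sq_sqrt (half_pos hpos).le
    refine ⟨(u, q.2 / (2 * u)), ⟨hu, mem_univ _⟩, Prod.ext ?_ ?_⟩
    · rw [parabolic, div_pow, mul_pow, hu_sq]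
      field_simp
      linarith [radius_sq q]
    · rw [parabolic]
      field_simp

/-- The derivative of `parabolic`. -/
noncomputable def parabolicDeriv (p : ℝ × ℝ) : ℝ × ℝ →L[ℝ] ℝ × ℝ :=
  (Matrix.toLin (.finTwoProd ℝ) (.finTwoProd ℝ)
    !![2 * p.1, -(2 * p.2); 2 * p.2, 2 * p.1]).toContinuousLinearMap

theorem hasFDerivAt_parabolic (p : ℝ × ℝ) : HasFDerivAt parabolic (parabolicDeriv p) p := by
  rw [parabolicDeriv, Matrix.toLin_finTwoProd_toContinuousLinearMap]
  have hfst : HasFDerivAt (fun p : ℝ × ℝ => p.1) (.fst ℝ ℝ ℝ) p := hasFDerivAt_fst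
  have hsnd : HasFDerivAt (fun p : ℝ × ℝ => p.2) (.snd ℝ ℝ ℝ) p := hasFDerivAt_snd
  refine (((hfst.pow 2).sub (hsnd.pow 2)).prodMk
    ((hfst.const_mul 2).mul hsnd)).congr_fderiv ?_
  ext <;> simp [mul_comm]

theorem abs_det_parabolicDeriv (p : ℝ × ℝ) :
    |(parabolicDeriv p).det| = 4 * (p.1 ^ 2 + p.2 ^ 2) := by
  rw [parabolicDeriv, LinearMap.det_toContinuousLinearMap, LinearMap.det_toLin,
    Matrix.det_fin_two_of, abs_of_nonneg (by nlinarith [sq_nonneg p.1, sq_nonneg p.2])]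
  ring

variable {E : Type*} [NormedAddCommGroup E] [NormedSpace ℝ E]

theorem integral_eq_integral_comp_parabolic (g : ℝ × ℝ → E) :
    ∫ q, g q = ∫ p in Ioi 0 ×ˢ univ, (4 * (p.1 ^ 2 + p.2 ^ 2)) • g (parabolic p) := by
  rw [← setIntegral_univ, ← setIntegral_congr_set polarCoord_source_ae_eq_univ, ← parabolic_image,
    integral_image_eq_integral_abs_det_fderiv_smul volume (measurableSet_Ioi.prod .univ)
      (fun p _ => (hasFDerivAt_parabolic p).hasFDerivWithinAt) injOn_parabolic]
  simp only [abs_det_parabolicDeriv]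

theorem integrable_iff_integrableOn_comp_parabolic {g : ℝ × ℝ → E} :
    Integrable g ↔
      IntegrableOn (fun p => (4 * (p.1 ^ 2 + p.2 ^ 2)) • g (parabolic p)) (Ioi 0 ×ˢ univ) := by
  rw [← integrableOn_univ, ← integrableOn_congr_set_ae polarCoord_source_ae_eq_univ,
    ← parabolic_image,
    integrableOn_image_iff_integrableOn_abs_det_fderiv_smul volume (measurableSet_Ioi.prod .univ)
      (fun p _ => (hasFDerivAt_parabolic p).hasFDerivWithinAt) injOn_parabolic]
  simp only [abs_det_parabolicDeriv]

end Parabolic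

/-! ### The Fourier transform of the resolvent kernel -/

section Resolvent

theorem norm_halfPlane_gaussian (w : ℂ) (b : ℝ) (p : ℝ × ℝ) :
    ‖(p.1 : ℂ) * Complex.exp (-w * p.2 ^ 2 + 2 * b * Complex.I * p.1 * p.2 + -conj w * p.1 ^ 2)‖ =
      ‖p.1 * Real.exp (-w.re * p.1 ^ 2) * Real.exp (-w.re * p.2 ^ 2)‖ := by
  rw [norm_mul, norm_mul, norm_mul, Complex.norm_real, Complex.norm_exp, Real.norm_of_nonneg
    (Real.exp_pos _).le, Real.norm_of_nonneg (Real.exp_pos _).le, mul_assoc ‖p.1‖, ← Real.exp_add]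
  congr 2
  simp [pow_two]
  ring

theorem integrable_halfPlane_gaussian {w : ℂ} (hw : 0 < w.re) (b : ℝ) :
    Integrable fun p : ℝ × ℝ => (p.1 : ℂ) *
      Complex.exp (-w * p.2 ^ 2 + 2 * b * Complex.I * p.1 * p.2 + -conj w * p.1 ^ 2) := by
  have hreal := (integrable_mul_exp_neg_mul_sq hw).mul_prod (integrable_exp_neg_mul_sq hw)
  exact hreal.mono (by fun_prop) (.of_forall fun p => (norm_halfPlane_gaussian w b p).le)

theorem integral_gaussian_slice {w : ℂ} (hw : 0 < w.re) (b u : ℝ) :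
    ∫ v : ℝ, (u : ℂ) *
        Complex.exp (-w * v ^ 2 + 2 * b * Complex.I * u * v + -conj w * u ^ 2) =
      (Real.pi / w) ^ (1 / 2 : ℂ) *
        (u * Complex.exp (-((Complex.normSq w + b ^ 2 : ℝ) / w) * u ^ 2)) := by
  have hw₀ : w ≠ 0 := fun h => by simp [h] at hw
  rw [integral_const_mul, integral_cexp_quadratic (by simpa using hw), neg_neg, mul_left_comm]
  congr 3
  push_cast [Complex.normSq_eq_conj_mul_self]
  field_simp
  linear_combination b ^ 2 * u ^ 2 * 4 * Complex.I_sq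

theorem integral_halfPlane_gaussian {w : ℂ} (hw : 0 < w.re) (b : ℝ) :
    ∫ p in Ioi (0 : ℝ) ×ˢ (univ : Set ℝ), (p.1 : ℂ) *
        Complex.exp (-w * p.2 ^ 2 + 2 * b * Complex.I * p.1 * p.2 + -conj w * p.1 ^ 2) =
      √Real.pi * w ^ (1 / 2 : ℂ) / (2 * (Complex.normSq w + b ^ 2 : ℝ)) := by
  have hw₀ : w ≠ 0 := fun h => by simp [h] at hw
  set d := Complex.normSq w + b ^ 2
  have hd : 0 < d := add_pos_of_pos_of_nonneg (Complex.normSq_pos.mpr hw₀) (sq_nonneg b)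
  have hre : 0 < ((d : ℂ) / w).re := by
    rw [Complex.div_re, Complex.ofReal_re, Complex.ofReal_im, zero_mul, zero_div, add_zero]
    have := Complex.normSq_pos.mpr hw₀
    positivity
  have harg : w.arg ≠ Real.pi := fun h => hw.not_gt (Complex.arg_eq_pi_iff.mp h).1
  rw [Measure.volume_eq_prod, setIntegral_prod _ (integrable_halfPlane_gaussian hw b).integrableOn]
  simp only [setIntegral_univ, integral_gaussian_slice hw]
  rw [integral_const_mul, integral_mul_cexp_neg_mul_sq hre, div_eq_mul_inv (Real.pi : ℂ),
    ofReal_mul_cpow_half Real.pi_pos.le, Complex.inv_cpow _ _ harg]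
  have hroot : w ^ (1 / 2 : ℂ) ≠ 0 := fun h => hw₀ (by rw [← cpow_half_sq w, h]; simp)
  have hd' : (d : ℂ) ≠ 0 := by exact_mod_cast hd.ne'
  field_simp
  rw [cpow_half_sq]

/-- The additive character `e^{i(ax+by)}` of the plane. -/
noncomputable def planeCharacter (a b : ℝ) (q : ℝ × ℝ) : ℂ :=
  Complex.exp ((a * q.1 + b * q.2 : ℝ) * Complex.I)

/-- Up to a constant factor, the resolvent density of planar Brownian motion killed on the slit and
started at its tip. -/
noncomputable def resolventKernel (k : ℝ) (q : ℝ × ℝ) : ℝ :=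
  (radius q)⁻¹ * Real.exp (-(k * radius q)) * √(q.1 + radius q)

variable {k : ℝ} (a b : ℝ)

theorem norm_planeCharacter (q : ℝ × ℝ) : ‖planeCharacter a b q‖ = 1 :=
  Complex.norm_exp_ofReal_mul_I _

theorem continuous_planeCharacter : Continuous (planeCharacter a b) := by
  unfold planeCharacter
  fun_prop

theorem resolventKernel_comp_parabolic (k : ℝ) {p : ℝ × ℝ} (hp : p ∈ Ioi 0 ×ˢ univ) :
    (4 * (p.1 ^ 2 + p.2 ^ 2)) • (planeCharacter a b (parabolic p) *
        resolventKernel k (parabolic p)) =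
      (4 * √2 : ℝ) * ((p.1 : ℂ) * Complex.exp (-(k + a * Complex.I) * p.2 ^ 2 +
        2 * b * Complex.I * p.1 * p.2 + -conj (k + a * Complex.I) * p.1 ^ 2)) := by
  have hu : 0 < p.1 := hp.1
  have hradius : ((p.1 : ℂ) ^ 2 + (p.2 : ℂ) ^ 2) ≠ 0 := by
    exact_mod_cast (show 0 < p.1 ^ 2 + p.2 ^ 2 by positivity).ne'
  have hexp : Complex.exp (-(k + a * Complex.I) * p.2 ^ 2 +
      2 * b * Complex.I * p.1 * p.2 + -conj (k + a * Complex.I) * p.1 ^ 2) =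
      planeCharacter a b (parabolic p) * (Real.exp (-(k * (p.1 ^ 2 + p.2 ^ 2))) : ℂ) := by
    rw [planeCharacter, parabolic, Complex.ofReal_exp, ← Complex.exp_add]
    congr 1
    simp only [map_add, map_mul, Complex.conj_ofReal, Complex.conj_I]
    push_cast
    ring
  rw [hexp, resolventKernel, fst_parabolic_add_radius, radius_parabolic,
    Real.sqrt_mul zero_le_two, Real.sqrt_sq hu.le, Complex.real_smul]
  push_cast
  field_simp

theorem integrable_planeCharacter_mul_resolventKernel (hk : 0 < k) :
    Integrable fun q => planeCharacter a b q * resolventKernel k q := by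
  rw [integrable_iff_integrableOn_comp_parabolic, integrableOn_congr_fun
    (fun p hp => resolventKernel_comp_parabolic a b k hp) (measurableSet_Ioi.prod .univ)]
  exact (integrable_halfPlane_gaussian (by simpa using hk) b).integrableOn.const_mul _

theorem integral_planeCharacter_mul_resolventKernel (hk : 0 < k) :
    ∫ q, planeCharacter a b q * resolventKernel k q =
      2 * √2 * √Real.pi * (k + a * Complex.I) ^ (1 / 2 : ℂ) / (k ^ 2 + a ^ 2 + b ^ 2 : ℝ) := by
  rw [integral_eq_integral_comp_parabolic, setIntegral_congr_fun (measurableSet_Ioi.prod .univ)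
    (fun p hp => resolventKernel_comp_parabolic a b k hp), integral_const_mul,
    integral_halfPlane_gaussian (by simpa using hk), Complex.normSq_add_mul_I]
  push_cast
  field_simp
  ring

end Resolvent

/-! ### The limit functions -/

section Limit

/-- The kernel `s^{-3/2} e^{-ρ²/s} √(x + ρ)`, up to a constant the limit of the rescaled density at
time `s` of the walk killed on the slit. -/
noncomputable def slitKernel (s : ℝ) (q : ℝ × ℝ) : ℝ :=
  (s * √s)⁻¹ * Real.exp (-(radius q ^ 2 / s)) * √(q.1 + radius q)

theorem slitKernel_nonneg {s : ℝ} (hs : 0 ≤ s) (q : ℝ × ℝ) : 0 ≤ slitKernel s q := by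
  unfold slitKernel
  positivity

theorem continuous_slitKernel (s : ℝ) : Continuous (slitKernel s) := by
  have := continuous_radius
  unfold slitKernel
  fun_prop

theorem sqrt_fst_add_radius_le (q : ℝ × ℝ) :
    √(q.1 + radius q) ≤ Real.exp (radius q ^ 2 / 2) := by
  rw [Real.exp_half]
  refine Real.sqrt_le_sqrt ?_
  linarith [le_abs_self q.1, abs_fst_le_radius q, sq_nonneg (radius q - 1),
    Real.add_one_le_exp (radius q ^ 2)]

theorem slitKernel_le {s : ℝ} (hs : 0 ≤ s) (q : ℝ × ℝ) :
    slitKernel s q ≤ (s * √s)⁻¹ * Real.exp (-((s⁻¹ - 1 / 2) * radius q ^ 2)) := by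
  calc slitKernel s q
    _ ≤ (s * √s)⁻¹ * Real.exp (-(radius q ^ 2 / s)) * Real.exp (radius q ^ 2 / 2) := by
      unfold slitKernel
      gcongr
      exact sqrt_fst_add_radius_le q
    _ = (s * √s)⁻¹ * Real.exp (-((s⁻¹ - 1 / 2) * radius q ^ 2)) := by
      rw [mul_assoc, ← Real.exp_add]
      ring_nf

theorem integrable_exp_neg_mul_radius_sq {k : ℝ} (hk : 0 < k) :
    Integrable fun q : ℝ × ℝ => Real.exp (-(k * radius q ^ 2)) := by
  refine ((integrable_exp_neg_mul_sq hk).mul_prod (integrable_exp_neg_mul_sq hk)).congr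
    (.of_forall fun q => ?_)
  simp only [radius_sq, ← Real.exp_add]
  ring_nf

theorem slitDensity_eq (q : ℝ × ℝ) :
    slitDensity q = √2 / Real.Gamma (1 / 4) * slitKernel 1 q := by
  simp [slitDensity, slitKernel, radius, Real.sq_sqrt (add_nonneg (sq_nonneg q.1) (sq_nonneg q.2)),
    mul_assoc]

theorem slitDensity_nonneg (q : ℝ × ℝ) : 0 ≤ slitDensity q := by
  have := Real.Gamma_pos_of_pos (s := 1 / 4) (by norm_num)
  unfold slitDensity
  positivity

theorem continuous_slitDensity : Continuous slitDensity := by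
  unfold slitDensity
  fun_prop

theorem integrable_slitDensity : Integrable slitDensity := by
  refine ((integrable_exp_neg_mul_radius_sq (k := 1 / 2) (by norm_num)).mono'
    (continuous_slitKernel 1).aestronglyMeasurable (.of_forall fun q => ?_)).const_mul
    (√2 / Real.Gamma (1 / 4)) |>.congr (.of_forall fun q => (slitDensity_eq q).symm)
  rw [Real.norm_of_nonneg (slitKernel_nonneg zero_le_one q)]
  convert slitKernel_le zero_le_one q using 1
  norm_num

/-- The limit of the rescaled Fourier transform at time `s` of the walk killed on the slit. -/
noncomputable def limitTransform (a b s : ℝ) : ℂ :=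
  (scalingConst * √2 / Real.pi : ℝ) * ∫ q, planeCharacter a b q * slitKernel s q

/-- The limit of the rescaled survival probability at time `s`. -/
noncomputable def limitSurvival (s : ℝ) : ℝ :=
  scalingConst * √2 / Real.Gamma (3 / 4) * s ^ (-1 / 4 : ℝ)

variable {l : ℝ} (a b : ℝ)

theorem integrableOn_and_integral_exp_mul_slitKernel (hl : 0 < l) (q : ℝ × ℝ) :
    IntegrableOn (fun s => Real.exp (-(l * s)) * slitKernel s q) (Ioi 0) ∧
      ∫ s in Ioi 0, Real.exp (-(l * s)) * slitKernel s q =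
        √Real.pi * resolventKernel (2 * √l) q := by
  simp only [slitKernel, ← mul_assoc]
  rcases (radius_nonneg q).eq_or_lt with hq | hq
  · have hfst : q.1 = 0 := abs_nonpos_iff.mp (hq ▸ abs_fst_le_radius q)
    simp [resolventKernel, hfst, ← hq]
  · obtain ⟨hint, heq⟩ := integrableOn_and_integral_exp_mul_passageTime hl hq
    simp only [← mul_assoc] at hint heq
    refine ⟨hint.mul_const _, ?_⟩
    rw [integral_mul_const, heq, resolventKernel]
    ring

theorem integrable_exp_smul_planeCharacter_mul_slitKernel (hl : 0 < l) :
    Integrable (fun x : ℝ × ℝ × ℝ =>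
      Real.exp (-(l * x.1)) • (planeCharacter a b x.2 * slitKernel x.1 x.2))
      ((volume.restrict (Ioi 0)).prod volume) := by
  have hmeas : Measurable fun x : ℝ × ℝ × ℝ =>
      Real.exp (-(l * x.1)) • (planeCharacter a b x.2 * slitKernel x.1 x.2) := by
    have := (continuous_planeCharacter a b).measurable
    unfold slitKernel radius
    fun_prop
  have hslice (q : ℝ × ℝ) := integrableOn_and_integral_exp_mul_slitKernel hl q
  rw [integrable_prod_iff' hmeas.aestronglyMeasurable]
  constructor
  · refine .of_forall fun q => ((hslice q).1.ofReal.const_mul (planeCharacter a b q)).congr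
      (.of_forall fun s => ?_)
    simp [mul_left_comm]
  · refine ((integrable_planeCharacter_mul_resolventKernel a b (k := 2 * √l)
      (by positivity)).norm.const_mul √Real.pi).congr (.of_forall fun q => ?_)
    have hnonneg : 0 ≤ resolventKernel (2 * √l) q := by
      have := radius_nonneg q
      unfold resolventKernel
      positivity
    simp only [norm_mul, norm_planeCharacter, norm_smul, Complex.norm_real, one_mul,
      Real.norm_of_nonneg hnonneg, ← (hslice q).2]
    refine setIntegral_congr_fun measurableSet_Ioi fun s hs => ?_
    rw [Real.norm_of_nonneg (slitKernel_nonneg (le_of_lt hs) q),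
      Real.norm_of_nonneg (Real.exp_pos _).le]

theorem exp_smul_limitTransform (s : ℝ) :
    Real.exp (-(l * s)) • limitTransform a b s = (scalingConst * √2 / Real.pi : ℝ) *
      ∫ q, Real.exp (-(l * s)) • (planeCharacter a b q * slitKernel s q) := by
  rw [limitTransform, integral_smul, mul_smul_comm]

theorem integrableOn_exp_smul_limitTransform (hl : 0 < l) :
    IntegrableOn (fun s => Real.exp (-(l * s)) • limitTransform a b s) (Ioi 0) := by
  simp only [exp_smul_limitTransform]
  exact (integrable_exp_smul_planeCharacter_mul_slitKernel a b hl).integral_prod_left.const_mul _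

theorem integral_exp_smul_limitTransform (hl : 0 < l) :
    ∫ s in Ioi 0, Real.exp (-(l * s)) • limitTransform a b s = laplaceLimit a b l := by
  have hslice (q : ℝ × ℝ) :
      ∫ s in Ioi 0, Real.exp (-(l * s)) • (planeCharacter a b q * slitKernel s q) =
        √Real.pi * (planeCharacter a b q * resolventKernel (2 * √l) q) := by
    simp only [← mul_smul_comm, ← Complex.ofReal_mul, Complex.real_smul, integral_const_mul,
      integral_complex_ofReal, (integrableOn_and_integral_exp_mul_slitKernel hl q).2]
    push_cast
    ring
  simp only [exp_smul_limitTransform]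
  rw [integral_const_mul,
    integral_integral_swap (integrable_exp_smul_planeCharacter_mul_slitKernel a b hl)]
  simp only [hslice]
  rw [integral_const_mul, integral_planeCharacter_mul_resolventKernel a b (by positivity),
    laplaceLimit, mul_pow, Real.sq_sqrt hl.le]
  have hpi : (√Real.pi : ℂ) ^ 2 = Real.pi := by exact_mod_cast Real.sq_sqrt Real.pi_pos.le
  have htwo : (√2 : ℂ) ^ 2 = 2 := by exact_mod_cast Real.sq_sqrt zero_le_two
  have hden : ((2 ^ 2 * l + a ^ 2 + b ^ 2 : ℝ) : ℂ) = 4 * (l + (a ^ 2 + b ^ 2) / 4 : ℝ) := by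
    push_cast
    ring
  have hden₀ : ((l + (a ^ 2 + b ^ 2) / 4 : ℝ) : ℂ) ≠ 0 := by
    exact_mod_cast (show 0 < l + (a ^ 2 + b ^ 2) / 4 by positivity).ne'
  rw [hden]
  push_cast at hden₀ ⊢
  field_simp
  rw [hpi, htwo]
  ring

theorem continuousAt_limitTransform_one : ContinuousAt (limitTransform a b) 1 := by
  have hinv : ContinuousAt (fun s : ℝ => (s * √s)⁻¹) 1 := by fun_prop (disch := simp)
  refine continuousAt_const.mul (continuousAt_of_dominated
    (bound := fun q => 2 * Real.exp (-(1 / 4 * radius q ^ 2))) ?_ ?_ ?_ ?_)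
  · have := continuous_planeCharacter a b
    have := continuous_slitKernel
    exact .of_forall fun s => Continuous.aestronglyMeasurable (by fun_prop)
  · filter_upwards [hinv.eventually_le_const (show (1 * √1)⁻¹ < (2 : ℝ) by norm_num),
      Ioo_mem_nhds (show (0 : ℝ) < 1 by norm_num) (show (1 : ℝ) < 4 / 3 by norm_num)]
      with s hs₂ ⟨hs₀, hs⟩
    refine .of_forall fun q => ?_
    rw [norm_mul, norm_planeCharacter, one_mul, Complex.norm_real,
      Real.norm_of_nonneg (slitKernel_nonneg hs₀.le q)]
    refine (slitKernel_le hs₀.le q).trans ?_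
    gcongr
    linarith [(le_inv_comm₀ (by norm_num) hs₀).mpr (by linarith : s ≤ (3 / 4 : ℝ)⁻¹)]
  · exact (integrable_exp_neg_mul_radius_sq (by norm_num)).const_mul _
  · refine .of_forall fun q => ?_
    unfold slitKernel
    fun_prop (disch := simp)

end Limit

/-! ### Laplace inversion and the limiting characteristic function -/

section Inversion

theorem scalingConst_pos : 0 < scalingConst := by
  have := abs_lt.mp (abs_cayley_lt_one (Real.sqrt_pos.mpr zero_lt_two))
  have : 0 < 1 + cayley √2 := by linarith
  unfold scalingConst kernelConst
  positivity

theorem limitSurvival_one_pos : 0 < limitSurvival 1 := by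
  have := scalingConst_pos
  have := Real.Gamma_pos_of_pos (s := 3 / 4) (by norm_num)
  unfold limitSurvival
  positivity

theorem integrableOn_exp_smul_limitSurvival :
    IntegrableOn (fun s => Real.exp (-s) • limitSurvival s) (Ioi 0) := by
  have hΓ := Real.GammaIntegral_convergent (s := 3 / 4) (by norm_num)
  rw [show (3 / 4 - 1 : ℝ) = -1 / 4 by norm_num] at hΓ
  refine IntegrableOn.congr_fun (hΓ.const_mul (scalingConst * √2 / Real.Gamma (3 / 4)))
    (fun s _ => ?_) measurableSet_Ioi
  rw [limitSurvival, smul_eq_mul]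
  ring

theorem laplaceLimit_zero_zero_re {l : ℝ} (hl : 0 < l) :
    (laplaceLimit 0 0 l).re = scalingConst * √2 * (1 / l) ^ (3 / 4 : ℝ) := by
  have hsqrt : √√l = l * (1 / l) ^ (3 / 4 : ℝ) := by
    rw [one_div, Real.inv_rpow hl.le, ← Real.rpow_neg hl.le, Real.sqrt_eq_rpow, Real.sqrt_eq_rpow,
      ← Real.rpow_mul hl.le]
    nth_rewrite 2 [← Real.rpow_one l]
    rw [← Real.rpow_add hl]
    norm_num
  have hcpow : (2 * √l : ℂ) ^ (1 / 2 : ℂ) = (√(2 * √l) : ℝ) := by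
    rw [ofReal_sqrt_eq_cpow (r := 2 * √l) (by positivity), Complex.ofReal_mul,
      Complex.ofReal_ofNat]
  rw [laplaceLimit, Complex.ofReal_zero, zero_mul, add_zero, hcpow, ← Complex.ofReal_mul,
    ← Complex.ofReal_div, Complex.ofReal_re, Real.sqrt_mul zero_le_two, hsqrt]
  simp only [zero_pow two_ne_zero, add_zero, zero_div]
  field_simp

theorem integral_exp_smul_limitSurvival {l : ℝ} (hl : 0 < l) :
    ∫ s in Ioi 0, Real.exp (-(l * s)) • limitSurvival s = (laplaceLimit 0 0 l).re := by
  have hΓ := Real.integral_rpow_mul_exp_neg_mul_Ioi (a := 3 / 4) (by norm_num) hl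
  rw [show (3 / 4 - 1 : ℝ) = -1 / 4 by norm_num] at hΓ
  have := Real.Gamma_pos_of_pos (s := 3 / 4) (by norm_num)
  rw [laplaceLimit_zero_zero_re hl]
  calc ∫ s in Ioi 0, Real.exp (-(l * s)) • limitSurvival s
    _ = scalingConst * √2 / Real.Gamma (3 / 4) *
        ∫ s in Ioi 0, s ^ (-1 / 4 : ℝ) * Real.exp (-(l * s)) := by
      rw [← integral_const_mul]
      refine integral_congr_ae (.of_forall fun s => ?_)
      simp only [limitSurvival, smul_eq_mul]
      ring
    _ = scalingConst * √2 * (1 / l) ^ (3 / 4 : ℝ) := by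
      rw [hΓ]
      field_simp

theorem hasLaplaceScaling_limitSurvival :
    HasLaplaceScaling (fun N n => √√N * survival n) limitSurvival :=
  hasLaplaceScaling_survival integrableOn_exp_smul_limitSurvival
    fun _ => integral_exp_smul_limitSurvival

theorem tendsto_sqrt_sqrt_mul_survival :
    Tendsto (fun N : ℕ => √√N * survival N) atTop (𝓝 (limitSurvival 1)) := by
  refine hasLaplaceScaling_limitSurvival.tendsto_of_antitone
    (fun N => survival_antitone.const_mul (Real.sqrt_nonneg _)) ?_
  unfold limitSurvival
  fun_prop (disch := simp)

variable (a b : ℝ)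

theorem tendsto_sqrt_sqrt_mul_aliveMean :
    Tendsto (fun N : ℕ => (√√N : ℂ) * aliveMean N (character (phase a N) (phase b N))) atTop
      (𝓝 (limitTransform a b 1)) :=
  (hasLaplaceScaling_aliveMean hasLaplaceScaling_limitSurvival
    (by simpa only [one_mul] using integrableOn_exp_smul_limitTransform a b one_pos)
    fun _ => integral_exp_smul_limitTransform a b).tendsto_of_slowlyOscillating
    (continuousAt_limitTransform_one a b)
    fun _ => slowlyOscillating_aliveMean a b tendsto_sqrt_sqrt_mul_survival

theorem Gamma_one_fourth_mul_Gamma_three_fourths :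
    Real.Gamma (1 / 4) * Real.Gamma (3 / 4) = Real.pi * √2 := by
  have h := Real.Gamma_mul_Gamma_one_sub (1 / 4)
  rw [show (1 - 1 / 4 : ℝ) = 3 / 4 by norm_num, mul_one_div, Real.sin_pi_div_four] at h
  rw [h]
  field_simp
  exact (Real.sq_sqrt zero_le_two).symm

theorem limitTransform_one : limitTransform a b 1 =
    limitSurvival 1 * ∫ q, planeCharacter a b q * slitDensity q := by
  have hconst : scalingConst * √2 / Real.pi =
      limitSurvival 1 * (√2 / Real.Gamma (1 / 4)) := by
    have := Real.Gamma_pos_of_pos (s := 1 / 4) (by norm_num)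
    have := Real.Gamma_pos_of_pos (s := 3 / 4) (by norm_num)
    rw [limitSurvival, Real.one_rpow, mul_one, div_mul_div_comm, mul_comm (Real.Gamma (3 / 4)),
      Gamma_one_fourth_mul_Gamma_three_fourths]
    field_simp
  rw [limitTransform, hconst, Complex.ofReal_mul, mul_assoc, ← integral_const_mul]
  simp only [slitDensity_eq, Complex.ofReal_mul, mul_left_comm]

theorem tendsto_aliveMean_div_survival :
    Tendsto (fun N : ℕ => aliveMean N (character (phase a N) (phase b N)) / survival N) atTop
      (𝓝 (∫ q, planeCharacter a b q * slitDensity q)) := by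
  have hne : (limitSurvival 1 : ℂ) ≠ 0 := by exact_mod_cast limitSurvival_one_pos.ne'
  have hlim := (tendsto_sqrt_sqrt_mul_aliveMean a b).div
    ((Complex.continuous_ofReal.tendsto _).comp tendsto_sqrt_sqrt_mul_survival) hne
  rw [limitTransform_one, mul_div_cancel_left₀ _ hne] at hlim
  refine hlim.congr' ?_
  filter_upwards [eventually_gt_atTop 0] with N hN
  have hsqrt : (√√N : ℂ) ≠ 0 := by
    exact_mod_cast (show 0 < √√(N : ℝ) by positivity).ne'
  rw [Pi.div_apply, Function.comp_apply, Complex.ofReal_mul]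
  exact mul_div_mul_left _ _ hsqrt

theorem integral_slitDensity : ∫ q, slitDensity q = 1 := by
  have hlim := tendsto_aliveMean_div_survival 0 0
  have hone (N : ℕ) : (survival N : ℂ) / survival N = 1 :=
    div_self (by exact_mod_cast (survival_pos N).ne')
  simp only [phase_zero, aliveMean_character_one, hone] at hlim
  have := tendsto_nhds_unique hlim tendsto_const_nhds
  simpa [planeCharacter, integral_complex_ofReal] using this

end Inversion

/-! ### Weak convergence -/

section WeakConvergence

/-- The point `p / √n`, in the complex plane so that characteristic functions are available. -/
noncomputable def rescale (n : ℕ) (p : ℤ × ℤ) : ℂ := ⟨p.1 / √n, p.2 / √n⟩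

/-- The law of the rescaled endpoint of a uniformly random walk of length `n` on the slit plane. -/
noncomputable def endpointMeasure (n : ℕ) : Measure ℂ :=
  ((slitWalks unitSteps n).card : ENNReal)⁻¹ •
    ∑ w ∈ slitWalks unitSteps n, Measure.dirac (rescale n (w (Fin.last n)))

/-- The measure with density `slitDensity`, on the complex plane. -/
noncomputable def limitMeasure : Measure ℂ :=
  (volume.withDensity fun q => ENNReal.ofReal (slitDensity q)).map
    Complex.measurableEquivRealProd.symm

variable {E : Type*} [NormedAddCommGroup E] [NormedSpace ℝ E]

instance isProbabilityMeasure_endpointMeasure (n : ℕ) :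
    IsProbabilityMeasure (endpointMeasure n) where
  measure_univ := by
    simpa [endpointMeasure] using ENNReal.inv_mul_cancel
      (by exact_mod_cast (card_slitWalks_unitSteps_pos n).ne') (ENNReal.natCast_ne_top _)

instance isProbabilityMeasure_limitMeasure : IsProbabilityMeasure limitMeasure := by
  have : IsProbabilityMeasure (volume.withDensity fun q => ENNReal.ofReal (slitDensity q)) := by
    constructor
    rw [withDensity_apply _ .univ, setLIntegral_univ, ← ofReal_integral_eq_lintegral_ofReal
      integrable_slitDensity (.of_forall slitDensity_nonneg), integral_slitDensity,
      ENNReal.ofReal_one]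
  exact Measure.isProbabilityMeasure_map
    Complex.measurableEquivRealProd.symm.measurable.aemeasurable

theorem integral_endpointMeasure [CompleteSpace E] (n : ℕ) (f : ℂ → E) :
    ∫ z, f z ∂endpointMeasure n = (survival n)⁻¹ • aliveMean n fun p => f (rescale n p) := by
  rw [endpointMeasure, integral_smul_measure, integral_finsetSum_measure fun w _ =>
    integrable_dirac (by simp), survival_eq_card, aliveMean, smul_smul]
  simp only [integral_dirac, ENNReal.toReal_inv, ENNReal.toReal_natCast]
  congr 1
  field_simp

theorem integral_limitMeasure (f : ℂ → E) :
    ∫ z, f z ∂limitMeasure = ∫ q : ℝ × ℝ, slitDensity q • f ⟨q.1, q.2⟩ := by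
  rw [limitMeasure, integral_map_equiv, integral_withDensity_eq_integral_toReal_smul
    continuous_slitDensity.measurable.ennreal_ofReal (by simp)]
  simp only [ENNReal.toReal_ofReal (slitDensity_nonneg _)]
  rfl

theorem exp_inner_rescale (n : ℕ) (p : ℤ × ℤ) (t : ℂ) :
    Complex.exp ((inner ℝ (rescale n p) t : ℝ) * Complex.I) =
      character (phase t.re n) (phase t.im n) p := by
  rw [character, phase, phase, ← Complex.exp_int_mul, ← Complex.exp_int_mul, ← Complex.exp_add,
    Complex.inner]
  congr 1
  simp [rescale]
  ring

theorem charFun_endpointMeasure (n : ℕ) (t : ℂ) :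
    charFun (endpointMeasure n) t =
      aliveMean n (character (phase t.re n) (phase t.im n)) / survival n := by
  rw [charFun_apply, integral_endpointMeasure]
  simp only [exp_inner_rescale, Complex.real_smul, Complex.ofReal_inv]
  rw [inv_mul_eq_div]

theorem charFun_limitMeasure (t : ℂ) :
    charFun limitMeasure t = ∫ q, planeCharacter t.re t.im q * slitDensity q := by
  rw [charFun_apply, integral_limitMeasure]
  refine integral_congr_ae (.of_forall fun q => ?_)
  simp only [Complex.real_smul, mul_comm (slitDensity q : ℂ), planeCharacter, Complex.inner]
  congr 4
  simp

theorem tendsto_endpointMeasure :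
    Tendsto (β := ProbabilityMeasure ℂ) (fun n => ⟨endpointMeasure n, inferInstance⟩) atTop
      (𝓝 ⟨limitMeasure, inferInstance⟩) := by
  refine ProbabilityMeasure.tendsto_of_tendsto_charFun fun t => ?_
  simp only [ProbabilityMeasure.coe_mk, charFun_endpointMeasure, charFun_limitMeasure]
  exact tendsto_aliveMean_div_survival t.re t.im

end WeakConvergence

end SlitWalk

/-- if `(Xₙ,Yₙ)` is the endpoint of a uniformly random `n`-step walk on
the slit plane, then `(Xₙ/√n, Yₙ/√n)` converges in distribution to the law on `ℝ²`
with density `f(x,y) = (√2/Γ(1/4)) e^{−(x²+y²)} √(x+√(x²+y²))` w.r.t. Lebesgue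
measure: tested against any bounded continuous function `g`, the expectation
`𝔼 g(Xₙ/√n, Yₙ/√n) = (∑_{(i,j)} a_{i,j}(n) g(i/√n, j/√n)) / a(n)` converges to
`∫ g·f`. -/
theorem slit_plane_limit_law (g : BoundedContinuousFunction (ℝ × ℝ) ℝ) :
    Tendsto (fun n : ℕ =>
        (∑' p : ℤ × ℤ, (slitCount sqSteps p.1 p.2 n : ℝ)
            * g ((p.1 : ℝ) / Real.sqrt n, (p.2 : ℝ) / Real.sqrt n))
          / (slitTotal sqSteps n : ℝ))
      atTop (nhds (∫ q : ℝ × ℝ, g q * slitDensity q)) := by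
  have hlim := MeasureTheory.ProbabilityMeasure.tendsto_iff_forall_integral_tendsto.mp
    SlitWalk.tendsto_endpointMeasure (g.compContinuous ⟨fun z : ℂ => (z.re, z.im), by fun_prop⟩)
  simp only [MeasureTheory.ProbabilityMeasure.coe_mk, SlitWalk.integral_endpointMeasure,
    SlitWalk.integral_limitMeasure] at hlim
  convert hlim using 2 with n
  · rw [SlitWalk.tsum_slitCount_mul_div_slitTotal n
      fun p => g ((p.1 : ℝ) / Real.sqrt n, (p.2 : ℝ) / Real.sqrt n), div_eq_inv_mul]
    rfl
  · simp [mul_comm]
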